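/- Let a, b be nonzero elements of F. Then there exists an F-algebra homomorphism O_q → ⊠_q that sends A ↦ a x_{30} + a⁻¹ x_{01} and B ↦ b x_{12} + b⁻¹ x_{23}, and this homomorphism is injective. -/

import Mathlib

/-!
The homomorphism exists because the elements `x_{i,i+1}` of `⊠_q` satisfy the relations of the algebra
`□_q` (consecutive ones are `q`-Weyl pairs, opposite ones satisfy the `q`-Serre relation), and these
imply the `q`-Dolan/Grady relations for the images of `A` and `B` (`IsSquare4.dolanGrady`).

For injectivity, let `⊠_q` act on a module for which the orbit map `z ↦ z · 1` of `O_q` is visibly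
injective.

* `U_q^+`, the algebra with generators `X`, `Y` and the two `q`-Serre relations, is a `□_q`-module: two
  of the generators of `□_q` act as left multiplications by `X` and `Y`, the other two as skew
  derivations that lower the degree by one (`squareOps_isSquare4`).
* Every `□_q`-module `U` embeds into a `⊠_q`-module `C ⊗ U`, where `C` is the group algebra of the free
  group on two letters, with the `x_{i,i+2}` acting on `C` by multiplication (`tetRep`). The Weyl
  relations between `x_{j,j+1}` and the `x_{i,i+2}` prescribe how an operator on `1 ⊗ U` extends to
  `C ⊗ U`. The remaining relations hold because the defect of each commutes up to nonzero scalars with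
  `C` and vanishes on `1 ⊗ U` (`indOp_isSquare4`).
* In the resulting action on `1 ⊗ U_q^+`, the elements `A` and `B` act as `a X` and `b Y` plus terms
  of lower degree. So if `p` is a noncommutative polynomial with homogeneous part `h` of top degree and
  `p(A, B) · 1 = 0`, then `h(a X, b Y) = 0` (`coeff_orbit`), hence `h(X, Y) = 0`. The Dolan/Grady
  relations are the Serre relations up to terms of lower degree, so the associated graded algebra of
  `O_q` is a quotient of `U_q^+`, and `h(A, B)` equals in `O_q` a polynomial of lower degree
  (`onsagerMk_mem_of_upMk_eq_zero`). Induction on the degree gives `p(A, B) = 0` in `O_q`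
  (`onsagerMk_eq_zero`).
-/

noncomputable section

/-- The `q`-Serre expression `u³v − [3]_q u²vu + [3]_q uvu² − vu³`,
where `[3]_q = (q³ − q⁻³)/(q − q⁻¹)`. -/
def qSerre {F : Type*} [Field F] (q : F) {A : Type*} [Ring A] [Algebra F A] (u v : A) : A :=
  u ^ 3 * v - ((q ^ 3 - q⁻¹ ^ 3) / (q - q⁻¹)) • (u ^ 2 * v * u)
    + ((q ^ 3 - q⁻¹ ^ 3) / (q - q⁻¹)) • (u * v * u ^ 2) - v * u ^ 3
/-- The defining relations (`q`-Dolan/Grady relations) of the `q`-Onsager algebra. -/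
inductive OnsagerRel (F : Type*) [Field F] (q : F) :
    FreeAlgebra F (Fin 2) → FreeAlgebra F (Fin 2) → Prop
  | DG1 : OnsagerRel F q (qSerre q (FreeAlgebra.ι F 0) (FreeAlgebra.ι F 1))
      (((q ^ 2 - q⁻¹ ^ 2) ^ 2) •
        (FreeAlgebra.ι F 1 * FreeAlgebra.ι F 0 - FreeAlgebra.ι F 0 * FreeAlgebra.ι F 1))
  | DG2 : OnsagerRel F q (qSerre q (FreeAlgebra.ι F 1) (FreeAlgebra.ι F 0))
      (((q ^ 2 - q⁻¹ ^ 2) ^ 2) •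
        (FreeAlgebra.ι F 0 * FreeAlgebra.ι F 1 - FreeAlgebra.ι F 1 * FreeAlgebra.ι F 0))

/-- The `q`-Onsager algebra `O_q`. -/
abbrev Onsager (F : Type*) [Field F] (q : F) := RingQuot (OnsagerRel F q)

/-- The generator `A` of `O_q`. -/
def Ag (F : Type*) [Field F] (q : F) : Onsager F q :=
  RingQuot.mkAlgHom F (OnsagerRel F q) (FreeAlgebra.ι F 0)

/-- The generator `B` of `O_q`. -/
def Bg (F : Type*) [Field F] (q : F) : Onsager F q :=
  RingQuot.mkAlgHom F (OnsagerRel F q) (FreeAlgebra.ι F 1)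
/-- Generator indices for the `q`-tetrahedron algebra: pairs `(i,j)` of elements of `ℤ/4ℤ`
with `j − i = 1` or `j − i = 2`. -/
abbrev TetGen := {p : ZMod 4 × ZMod 4 // p.2 - p.1 = 1 ∨ p.2 - p.1 = 2}

/-- The free generator corresponding to `x_{ij}`. -/
def tg (F : Type*) [Field F] (i j : ZMod 4) (h : j - i = 1 ∨ j - i = 2) :
    FreeAlgebra F TetGen :=
  FreeAlgebra.ι F ⟨(i, j), h⟩

/-- The defining relations of the `q`-tetrahedron algebra `⊠_q`. -/
inductive TetRel (F : Type*) [Field F] (q : F) :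
    FreeAlgebra F TetGen → FreeAlgebra F TetGen → Prop
  | inv (i j : ZMod 4) (h : j - i = 2) (h' : i - j = 2) :
      TetRel F q (tg F i j (Or.inr h) * tg F j i (Or.inr h')) 1
  | weyl11 (i j k : ZMod 4) (h1 : j - i = 1) (h2 : k - j = 1) : TetRel F q
      ((q - q⁻¹)⁻¹ • (q • (tg F i j (Or.inl h1) * tg F j k (Or.inl h2))
        - q⁻¹ • (tg F j k (Or.inl h2) * tg F i j (Or.inl h1)))) 1
  | weyl12 (i j k : ZMod 4) (h1 : j - i = 1) (h2 : k - j = 2) : TetRel F q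
      ((q - q⁻¹)⁻¹ • (q • (tg F i j (Or.inl h1) * tg F j k (Or.inr h2))
        - q⁻¹ • (tg F j k (Or.inr h2) * tg F i j (Or.inl h1)))) 1
  | weyl21 (i j k : ZMod 4) (h1 : j - i = 2) (h2 : k - j = 1) : TetRel F q
      ((q - q⁻¹)⁻¹ • (q • (tg F i j (Or.inr h1) * tg F j k (Or.inl h2))
        - q⁻¹ • (tg F j k (Or.inl h2) * tg F i j (Or.inr h1)))) 1
  | serre (i j k l : ZMod 4) (h1 : j - i = 1) (h2 : k - j = 1) (h3 : l - k = 1) :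
      TetRel F q (qSerre q (tg F i j (Or.inl h1)) (tg F k l (Or.inl h3))) 0

/-- The `q`-tetrahedron algebra `⊠_q`. -/
abbrev Tet (F : Type*) [Field F] (q : F) := RingQuot (TetRel F q)

/-- The generators `x_{ij}` of `⊠_q`. -/
def xt (F : Type*) [Field F] (q : F) (i j : ZMod 4) (h : j - i = 1 ∨ j - i = 2) : Tet F q :=
  RingQuot.mkAlgHom F (TetRel F q) (tg F i j h)

/-! ### Consequences of the `q`-Weyl relations -/

section Formal

variable {F : Type*} [Field F] {R : Type*} [Ring R] [Algebra F R]

theorem qSerre_eq {q : F} (hq : q ≠ 0) (hq2 : q ^ 2 ≠ 1) (u v : R) :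
    qSerre q u v = u * (u * (u * v)) - (q ^ 2 + 1 + q⁻¹ ^ 2) • (u * (u * (v * u)))
      + (q ^ 2 + 1 + q⁻¹ ^ 2) • (u * (v * (u * u))) - v * (u * (u * u)) := by
  have h : (q ^ 3 - q⁻¹ ^ 3) / (q - q⁻¹) = q ^ 2 + 1 + q⁻¹ ^ 2 := by
    have h1 : q - q⁻¹ ≠ 0 := by
      intro h
      apply hq2
      field_simp at h
      linear_combination h
    rw [div_eq_iff h1]
    field_simp
    ring
  unfold qSerre
  rw [h]
  simp only [pow_three, sq u, mul_assoc]

theorem qSerre_inv {q : F} (u v : R) : qSerre q⁻¹ u v = qSerre q u v := by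
  have h : (q⁻¹ ^ 3 - q⁻¹⁻¹ ^ 3) / (q⁻¹ - q⁻¹⁻¹) = (q ^ 3 - q⁻¹ ^ 3) / (q - q⁻¹) := by
    rw [inv_inv, ← neg_sub (q ^ 3), ← neg_sub q, neg_div_neg_eq]
  unfold qSerre; rw [h]

/-- The `q`-Weyl relation `(q u v - q⁻¹ v u) / (q - q⁻¹) = 1`, cleared of its denominator. -/
def Weyl (q : F) (u v : R) : Prop := q • (u * v) - q⁻¹ • (v * u) = (q - q⁻¹) • 1

theorem Weyl.inv {q : F} {u v : R} (h : Weyl q u v) : Weyl q⁻¹ v u := by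
  unfold Weyl at *
  rw [inv_inv, ← neg_sub, h, ← neg_smul, neg_sub]

theorem weyl_iff {q : F} (hq : q ≠ 0) {u v : R} :
    Weyl q u v ↔ v * u = q ^ 2 • (u * v) + (1 - q ^ 2) • 1 := by
  unfold Weyl
  constructor
  · intro h
    have h2 := congrArg (fun z => q • z) h
    simp only [smul_sub, smul_smul, mul_inv_cancel₀ hq, one_smul] at h2
    have h3 : v * u = (q * q) • (u * v) - (q * (q - q⁻¹)) • 1 := by rw [← h2]; abel
    rw [h3]
    match_scalars <;> field_simp
    ring
  · intro h
    rw [h]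
    match_scalars <;> field_simp <;> ring

theorem weyl_iff' {q : F} (hq : q ≠ 0) {u v : R} :
    Weyl q u v ↔ u * v = q⁻¹ ^ 2 • (v * u) + (1 - q⁻¹ ^ 2) • 1 := by
  rw [← weyl_iff (inv_ne_zero hq)]
  exact ⟨Weyl.inv, fun h => by simpa using h.inv⟩

/-- Left multiplication of a rewriting rule, in the right-associated form that `simp` needs. -/
theorem assoc_rule {T X Y : R} {a b : F} {Z : R} (h : T * X = a • Y + b • Z) (c : R) :
    T * (X * c) = a • (Y * c) + b • (Z * c) := by
  rw [← mul_assoc, h, add_mul, smul_mul_assoc, smul_mul_assoc]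

/-- If `T` sits between `X` and `Y` in the cyclic order, it commutes up to a scalar with the Serre
expression in `X` and `Y`, whether or not that expression vanishes. -/
theorem serre_comm_middle {q : F} (hq : q ≠ 0) (hq2 : q ^ 2 ≠ 1) {X Y T : R}
    (h1 : Weyl q X T) (h2 : Weyl q T Y) :
    T * qSerre q X Y = q ^ 4 • (qSerre q X Y * T) := by
  have r1 := (weyl_iff hq).1 h1
  have r2 := (weyl_iff' hq).1 h2
  have r1' := assoc_rule r1
  have r2' := assoc_rule r2
  rw [qSerre_eq hq hq2]
  simp only [mul_add, add_mul, mul_sub, sub_mul, smul_mul_assoc, mul_smul_comm, mul_assoc,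
    r1, r2, r1', r2', smul_add, smul_sub, one_mul, mul_one, smul_smul]
  match_scalars <;> field_simp <;> ring

theorem serre_comm_middle' {q : F} (hq : q ≠ 0) (hq2 : q ^ 2 ≠ 1) {X Y T : R}
    (h1 : Weyl q X T) (h2 : Weyl q T Y) :
    T * qSerre q Y X = q⁻¹ ^ 4 • (qSerre q Y X * T) := by
  rw [← qSerre_inv]
  refine serre_comm_middle (inv_ne_zero hq) ?_ h2.inv h1.inv
  rwa [inv_pow, ne_eq, inv_eq_one]

/-- The Weyl relation between `Y` and `K⁻¹`, rewritten as a rule moving `K` past `Y`. -/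
theorem weyl_inverse_rule {q : F} (hq : q ≠ 0) {Y K L : R} (hKL : K * L = 1) (hLK : L * K = 1)
    (h : Weyl q Y L) : K * Y = q⁻¹ ^ 2 • (Y * K) + (1 - q⁻¹ ^ 2) • (K * K) := by
  have r := congrArg (fun z => K * z * K) ((weyl_iff' hq).1 h)
  simp only [mul_add, add_mul, smul_mul_assoc, mul_smul_comm, mul_one] at r
  rw [mul_assoc, mul_assoc, hLK, mul_one, ← mul_assoc, hKL, one_mul] at r
  exact r

/-- `K = x_{i,i+2}` commutes up to a scalar with the Serre expression in `X` and `Y` when it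
follows `X` and its inverse follows `Y`. -/
theorem serre_comm_inverse {q : F} (hq : q ≠ 0) (hq2 : q ^ 2 ≠ 1) {X Y K L : R}
    (hKL : K * L = 1) (hLK : L * K = 1) (h1 : Weyl q X K) (h2 : Weyl q Y L) :
    K * qSerre q X Y = q ^ 4 • (qSerre q X Y * K) := by
  have r1 := (weyl_iff hq).1 h1
  have r2 := weyl_inverse_rule hq hKL hLK h2
  have r1' := assoc_rule r1
  have r2' := assoc_rule r2
  rw [qSerre_eq hq hq2]
  simp only [mul_add, add_mul, mul_sub, sub_mul, smul_mul_assoc, mul_smul_comm, mul_assoc,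
    r1, r2, r1', r2', smul_add, smul_sub, one_mul, mul_one, smul_smul]
  match_scalars <;> field_simp <;> ring

theorem serre_comm_inverse' {q : F} (hq : q ≠ 0) (hq2 : q ^ 2 ≠ 1) {X Y K L : R}
    (hKL : K * L = 1) (hLK : L * K = 1) (h1 : Weyl q K X) (h2 : Weyl q L Y) :
    K * qSerre q X Y = q⁻¹ ^ 4 • (qSerre q X Y * K) := by
  rw [← qSerre_inv]
  refine serre_comm_inverse (inv_ne_zero hq) ?_ hKL hLK h1.inv h2.inv
  rwa [inv_pow, ne_eq, inv_eq_one]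

/-- The defect of the Weyl relation between `X` and `Y` commutes with a `K` that completes them to
a cyclic Weyl triple. -/
theorem weyl_comm_triple {q : F} (hq : q ≠ 0) {X Y K : R}
    (h1 : Weyl q K X) (h2 : Weyl q Y K) :
    K * (q • (X * Y) - q⁻¹ • (Y * X) - (q - q⁻¹) • 1)
      = (1 : F) • ((q • (X * Y) - q⁻¹ • (Y * X) - (q - q⁻¹) • 1) * K) := by
  have r1 := (weyl_iff' hq).1 h1
  have r2 := (weyl_iff hq).1 h2
  have r1' := assoc_rule r1
  have r2' := assoc_rule r2
  simp only [mul_add, mul_sub, sub_mul, smul_mul_assoc, mul_smul_comm, mul_assoc,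
    r1, r2, r1', r2', smul_add, smul_sub, one_mul, mul_one, smul_smul]
  match_scalars <;> field_simp <;> ring

/-- The defect of the Weyl relation between `X` and `Y` commutes up to a scalar with a `K`
following `X` whose inverse precedes `Y`. -/
theorem weyl_comm_inverse {q : F} (hq : q ≠ 0) {X Y K L : R}
    (hKL : K * L = 1) (hLK : L * K = 1) (h1 : Weyl q X K) (h2 : Weyl q L Y) :
    K * (q • (X * Y) - q⁻¹ • (Y * X) - (q - q⁻¹) • 1)
      = q ^ 4 • ((q • (X * Y) - q⁻¹ • (Y * X) - (q - q⁻¹) • 1) * K) := by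
  have r1 := (weyl_iff hq).1 h1
  have r2 := weyl_inverse_rule (inv_ne_zero hq) hKL hLK h2.inv
  have r1' := assoc_rule r1
  have r2' := assoc_rule r2
  simp only [mul_add, mul_sub, sub_mul, smul_mul_assoc, mul_smul_comm, mul_assoc,
    r1, r2, r1', r2', smul_add, smul_sub, one_mul, mul_one, smul_smul]
  match_scalars <;> field_simp <;> ring

theorem comm_inverse {K L S : R} {c : F} (hc : c ≠ 0) (hKL : K * L = 1) (hLK : L * K = 1)
    (h : K * S = c • (S * K)) : L * S = c⁻¹ • (S * L) := by
  have r := congrArg (fun z => c⁻¹ • (L * z * L)) h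
  simp only [smul_mul_assoc, mul_smul_comm, smul_smul, inv_mul_cancel₀ hc, one_smul] at r
  rw [← mul_assoc, hLK, one_mul, mul_assoc, mul_assoc, hKL, mul_one] at r
  exact r.symm

/-- Half of the `q`-Dolan/Grady relation: the expression is linear in its second argument, so
the relation for `b Y + b⁻¹ W` follows from this one and its mirror image. -/
theorem dolanGrady_half {q : F} (hq : q ≠ 0) (hq2 : q ^ 2 ≠ 1) {a : F} (ha : a ≠ 0) {X Y Z : R}
    (h1 : Weyl q X Z) (h2 : Weyl q Z Y) (hS : qSerre q X Y = 0) :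
    qSerre q (a • X + a⁻¹ • Z) Y =
      ((q ^ 2 - q⁻¹ ^ 2) ^ 2) • (Y * (a • X + a⁻¹ • Z) - (a • X + a⁻¹ • Z) * Y) := by
  have r1 := (weyl_iff hq).1 h1
  have r2 := (weyl_iff' hq).1 h2
  have r1' := assoc_rule r1
  have r2' := assoc_rule r2
  rw [← sub_eq_zero, ← smul_zero (a ^ 3), ← hS, qSerre_eq hq hq2, qSerre_eq hq hq2]
  simp only [mul_add, add_mul, mul_sub, sub_mul, smul_mul_assoc, mul_smul_comm, mul_assoc,
    r1, r2, r1', r2', smul_add, smul_sub, one_mul, mul_one, smul_smul]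
  match_scalars <;> field_simp <;> ring

theorem qSerre_add_right (q : F) (u v w : R) (b c : F) :
    qSerre q u (b • v + c • w) = b • qSerre q u v + c • qSerre q u w := by
  simp only [qSerre, mul_add, add_mul, smul_mul_assoc, mul_smul_comm]
  module

end Formal

/-! ### Induction along generators -/

section Generation

variable {F : Type*} [Field F] {ι : Type*}

/-- A free algebra is spanned from `1` by left multiplications by the generators. -/
theorem freeAlgebra_induction (N : Submodule F (FreeAlgebra F ι)) (h1 : 1 ∈ N)
    (hmul : ∀ i, ∀ p ∈ N, FreeAlgebra.ι F i * p ∈ N) (p : FreeAlgebra F ι) : p ∈ N := by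
  have key : ∀ p : FreeAlgebra F ι, ∀ c ∈ N, p * c ∈ N := by
    intro p
    induction p using FreeAlgebra.induction with
    | grade0 s =>
      intro c hc
      rw [← Algebra.smul_def]
      exact N.smul_mem s hc
    | grade1 i => exact hmul i
    | mul a b ha hb =>
      intro c hc
      rw [mul_assoc]
      exact ha _ (hb _ hc)
    | add a b ha hb =>
      intro c hc
      rw [add_mul]
      exact N.add_mem (ha _ hc) (hb _ hc)
  simpa using key p 1 h1

/-- A presented algebra is spanned from `1` by left multiplications by the generators. -/
theorem ringQuot_induction (r : FreeAlgebra F ι → FreeAlgebra F ι → Prop)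
    (N : Submodule F (RingQuot r)) (h1 : 1 ∈ N)
    (hmul : ∀ i, ∀ c ∈ N, RingQuot.mkAlgHom F r (FreeAlgebra.ι F i) * c ∈ N)
    (c : RingQuot r) : c ∈ N := by
  obtain ⟨p, rfl⟩ := RingQuot.mkAlgHom_surjective F r c
  refine freeAlgebra_induction (N.comap (RingQuot.mkAlgHom F r).toLinearMap) ?_ ?_ p
  · simpa using h1
  · intro i p hp
    rw [Submodule.mem_comap, AlgHom.toLinearMap_apply] at hp ⊢
    rw [map_mul]
    exact hmul i _ hp

end Generation

/-! ### The torus generated by the `x_{i,i+2}` -/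

section Torus

/-- The relations `k_i k_{i+2} = 1`. As `i` runs over `ℤ/4ℤ` they make `k_i` and `k_{i+2}` mutually
inverse and leave `k_0` and `k_1` otherwise free. -/
inductive TorusRel (F : Type*) [Field F] : FreeAlgebra F (ZMod 4) → FreeAlgebra F (ZMod 4) → Prop
  | inv (i : ZMod 4) : TorusRel F (FreeAlgebra.ι F i * FreeAlgebra.ι F (i + 2)) 1

/-- The group algebra of the free group on two letters, presented by generators `k_i`,
`i ∈ ℤ/4ℤ`, modelling the elements `x_{i,i+2}` of `⊠_q`. It is a `def`, so that instance search
does not unfold it. -/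
def Torus (F : Type*) [Field F] := RingQuot (TorusRel F)

variable (F : Type*) [Field F]

instance : Ring (Torus F) := inferInstanceAs (Ring (RingQuot (TorusRel F)))

instance : Algebra F (Torus F) := inferInstanceAs (Algebra F (RingQuot (TorusRel F)))

/-- The quotient map onto the torus. -/
def torusMk : FreeAlgebra F (ZMod 4) →ₐ[F] Torus F := RingQuot.mkAlgHom F (TorusRel F)

/-- The generator `k_i`, modelling `x_{i,i+2}`. -/
def kt (i : ZMod 4) : Torus F := torusMk F (FreeAlgebra.ι F i)

variable {F}

theorem kt_mul (i : ZMod 4) : kt F i * kt F (i + 2) = 1 := by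
  have h : torusMk F _ = torusMk F _ := RingQuot.mkAlgHom_rel F (TorusRel.inv (F := F) i)
  simpa [kt] using h

theorem kt_mul' (i j : ZMod 4) (h : j = i + 2) : kt F i * kt F j = 1 := by
  subst h; exact kt_mul i

/-- The universal property of the torus. -/
def torusLift {A : Type*} [Ring A] [Algebra F A] (E : ZMod 4 → A)
    (hE : ∀ i, E i * E (i + 2) = 1) : Torus F →ₐ[F] A :=
  RingQuot.liftAlgHom F (s := TorusRel F) ⟨FreeAlgebra.lift F E, by
    rintro _ _ ⟨i⟩
    simpa using hE i⟩

@[simp] theorem torusLift_kt {A : Type*} [Ring A] [Algebra F A] (E : ZMod 4 → A)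
    (hE : ∀ i, E i * E (i + 2) = 1) (i : ZMod 4) : torusLift E hE (kt F i) = E i := by
  change RingQuot.liftAlgHom F _ (RingQuot.mkAlgHom F (TorusRel F) (FreeAlgebra.ι F i)) = E i
  rw [RingQuot.liftAlgHom_mkAlgHom_apply, FreeAlgebra.lift_ι_apply]

theorem torus_induction (N : Submodule F (Torus F)) (h1 : 1 ∈ N)
    (hmul : ∀ i, ∀ c ∈ N, kt F i * c ∈ N) (c : Torus F) : c ∈ N :=
  ringQuot_induction _ N h1 hmul c

/-- The scalar `χ_m` in the commutation rule `T k_{j+m} = χ_m k_{j+m} T + d_{j,m}` that the relations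
of `⊠_q` impose on `T = x_{j,j+1}`. -/
def chi (q : F) : ZMod 4 → F
  | 0 => q⁻¹ ^ 2
  | 1 => q⁻¹ ^ 2
  | 2 => q ^ 2
  | 3 => q ^ 2

/-- The correction `d_{j,m}` in the commutation rule `T k_{j+m} = χ_m k_{j+m} T + d_{j,m}` that the
relations of `⊠_q` impose on `T = x_{j,j+1}`. For `m = 1` and `m = 2` the rule is a Weyl relation;
for `m = 3` and `m = 0` it is obtained by passing to the inverse. -/
def dk (q : F) (j : ZMod 4) : ZMod 4 → Torus F
  | 0 => (1 - q⁻¹ ^ 2) • (kt F j * kt F j)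
  | 1 => (1 - q⁻¹ ^ 2) • 1
  | 2 => (1 - q ^ 2) • 1
  | 3 => (1 - q ^ 2) • (kt F (j + 3) * kt F (j + 3))

theorem chi_mul {q : F} (hq : q ≠ 0) (m : ZMod 4) : chi q m * chi q (m + 2) = 1 := by
  have : q⁻¹ ^ 2 * q ^ 2 = 1 := by field_simp
  have : q ^ 2 * q⁻¹ ^ 2 = 1 := by field_simp
  fin_cases m <;> assumption

/-- Compatibility of the commutation rule with `k_i k_{i+2} = 1`. -/
theorem dk_mul {q : F} (hq : q ≠ 0) (j m : ZMod 4) :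
    chi q m • (kt F (j + m) * dk q j (m + 2)) + dk q j m * kt F (j + (m + 2)) = 0 := by
  have e : ∀ j : ZMod 4, j = j + 2 + 2 ∧ j + 3 = j + 1 + 2 ∧ j + 1 = j + 3 + 2 := by decide
  have h02 : kt F j * kt F (j + 2) = 1 := kt_mul j
  have h20 : kt F (j + 2) * kt F j = 1 := kt_mul' _ _ (e j).1
  have h13 : kt F (j + 1) * kt F (j + 3) = 1 := kt_mul' _ _ (e j).2.1
  have h31 : kt F (j + 3) * kt F (j + 1) = 1 := kt_mul' _ _ (e j).2.2
  fin_cases m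
  · change q⁻¹ ^ 2 • (kt F (j + 0) * ((1 - q ^ 2) • 1)) +
      ((1 - q⁻¹ ^ 2) • (kt F j * kt F j)) * kt F (j + 2) = 0
    rw [add_zero, smul_mul_assoc, mul_assoc, h02, mul_smul_comm]
    match_scalars
    field_simp
    ring
  · change q⁻¹ ^ 2 • (kt F (j + 1) * ((1 - q ^ 2) • (kt F (j + 3) * kt F (j + 3)))) +
      ((1 - q⁻¹ ^ 2) • 1) * kt F (j + 3) = 0
    rw [mul_smul_comm, ← mul_assoc, h13, smul_mul_assoc]
    match_scalars
    field_simp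
    ring
  · change q ^ 2 • (kt F (j + 2) * ((1 - q⁻¹ ^ 2) • (kt F j * kt F j))) +
      ((1 - q ^ 2) • 1) * kt F (j + 0) = 0
    rw [mul_smul_comm, ← mul_assoc, h20, smul_mul_assoc, add_zero]
    match_scalars
    field_simp
    ring
  · change q ^ 2 • (kt F (j + 3) * ((1 - q⁻¹ ^ 2) • 1)) +
      ((1 - q ^ 2) • (kt F (j + 3) * kt F (j + 3))) * kt F (j + 1) = 0
    rw [smul_mul_assoc, mul_assoc, h31, mul_smul_comm]
    match_scalars
    field_simp
    ring

end Torus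

/-! ### Extending operators from `U` to the induced module -/

section Extension

open TensorProduct

variable {F : Type*} [Field F] {U : Type*} [AddCommGroup U] [Module F U]

/-- The action of the torus on the induced module `C ⊗ U`. -/
def kap (F : Type*) [Field F] (U : Type*) [AddCommGroup U] [Module F U] :
    Torus F →ₐ[F] Module.End F (Torus F ⊗[F] U) :=
  Algebra.lsmul F F (Torus F ⊗[F] U)

theorem kap_tmul (c d : Torus F) (u : U) : kap F U c (d ⊗ₜ u) = (c * d) ⊗ₜ u := rfl

/-- The commutation rule `T k_i = χ k_i T + d` turned into an operator on pairs `(T v, v)`: it sends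
`(T v, v)` to `(T (k_i v), k_i v)`. -/
def twistGen (U : Type*) [AddCommGroup U] [Module F U] (q : F) (j i : ZMod 4) :
    Module.End F ((Torus F ⊗[F] U) × (Torus F ⊗[F] U)) :=
  LinearMap.prod
    (chi q (i - j) • (kap F U (kt F i) ∘ₗ LinearMap.fst F _ _)
      + kap F U (dk q j (i - j)) ∘ₗ LinearMap.snd F _ _)
    (kap F U (kt F i) ∘ₗ LinearMap.snd F _ _)

theorem twistGen_mul {q : F} (hq : q ≠ 0) (j i : ZMod 4) :
    twistGen U q j i * twistGen U q j (i + 2) = 1 := by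
  obtain ⟨m, rfl⟩ : ∃ m, i = j + m := ⟨i - j, by ring⟩
  have e1 : j + m - j = m := by ring
  have e2 : j + m + 2 - j = m + 2 := by ring
  have hk : ∀ v, kap F U (kt F (j + m)) (kap F U (kt F (j + m + 2)) v) = v := by
    intro v
    rw [← Module.End.mul_apply, ← map_mul, kt_mul, map_one, Module.End.one_apply]
  refine LinearMap.ext fun w => Prod.ext ?_ ?_
  · have h := congrArg (fun c => kap F U c w.2) (dk_mul hq j m)
    simp only [map_add, map_smul, map_mul, map_zero, LinearMap.add_apply, LinearMap.smul_apply,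
      Module.End.mul_apply, LinearMap.zero_apply] at h
    change chi q (j + m - j) • kap F U (kt F (j + m))
        (chi q (j + m + 2 - j) • kap F U (kt F (j + m + 2)) w.1
          + kap F U (dk q j (j + m + 2 - j)) w.2)
      + kap F U (dk q j (j + m - j)) (kap F U (kt F (j + m + 2)) w.2) = w.1
    rw [← add_assoc] at h
    rw [e1, e2, map_add, map_smul, hk, smul_add, smul_smul, chi_mul hq, one_smul, add_assoc, h,
      add_zero]
  · exact hk w.2

/-- The torus acting on pairs `(T v, v)` by the rule that moves `T = x_{j,j+1}` to the right. -/
def twist {q : F} (hq : q ≠ 0) (U : Type*) [AddCommGroup U] [Module F U] (j : ZMod 4) :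
    Torus F →ₐ[F] Module.End F ((Torus F ⊗[F] U) × (Torus F ⊗[F] U)) :=
  torusLift (twistGen U q j) (twistGen_mul hq j)

theorem twist_snd {q : F} (hq : q ≠ 0) (j : ZMod 4) (c : Torus F)
    (w : (Torus F ⊗[F] U) × (Torus F ⊗[F] U)) : (twist hq U j c w).2 = kap F U c w.2 := by
  refine torus_induction (LinearMap.eqLocus
    (LinearMap.snd F (Torus F ⊗[F] U) (Torus F ⊗[F] U) ∘ₗ LinearMap.applyₗ w ∘ₗ
      (twist hq U j).toLinearMap)
    (LinearMap.applyₗ w.2 ∘ₗ (kap F U).toLinearMap)) ?_ ?_ c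
  · simp
  · intro i c hc
    simp only [LinearMap.mem_eqLocus, LinearMap.comp_apply, AlgHom.toLinearMap_apply,
      LinearMap.applyₗ_apply_apply, LinearMap.snd_apply, map_mul, Module.End.mul_apply] at hc ⊢
    rw [← hc, twist, torusLift_kt]
    rfl

/-- The extension to `C ⊗ U` of an operator `T` on `U`, the unique one that satisfies the
commutation rules of `x_{j,j+1}` with the torus `C`. -/
def indOp {q : F} (hq : q ≠ 0) (j : ZMod 4) (T : Module.End F U) :
    Module.End F (Torus F ⊗[F] U) :=
  TensorProduct.lift (LinearMap.mk₂ F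
    (fun c u => (twist hq U j c ((1 : Torus F) ⊗ₜ[F] T u, (1 : Torus F) ⊗ₜ[F] u)).1)
    (by intros; simp) (by intros; simp)
    (by
      intro c u v
      rw [map_add, tmul_add, tmul_add, ← Prod.mk_add_mk, map_add, Prod.fst_add])
    (by
      intro s c u
      rw [map_smul, tmul_smul, tmul_smul, ← Prod.smul_mk, map_smul, Prod.smul_fst]))

theorem indOp_tmul {q : F} (hq : q ≠ 0) (j : ZMod 4) (T : Module.End F U) (c : Torus F) (u : U) :
    indOp hq j T (c ⊗ₜ u) = (twist hq U j c ((1 : Torus F) ⊗ₜ[F] T u, (1 : Torus F) ⊗ₜ[F] u)).1 :=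
  rfl

theorem indOp_one_tmul {q : F} (hq : q ≠ 0) (j : ZMod 4) (T : Module.End F U) (u : U) :
    indOp hq j T (1 ⊗ₜ u) = 1 ⊗ₜ T u := by
  rw [indOp_tmul, map_one, Module.End.one_apply]

theorem indOp_mul_kt {q : F} (hq : q ≠ 0) (j i : ZMod 4) (T : Module.End F U) :
    indOp hq j T * kap F U (kt F i) =
      chi q (i - j) • (kap F U (kt F i) * indOp hq j T) + kap F U (dk q j (i - j)) := by
  refine TensorProduct.ext' fun c u => ?_
  rw [Module.End.mul_apply, kap_tmul, indOp_tmul, map_mul, Module.End.mul_apply]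
  simp only [LinearMap.add_apply, LinearMap.smul_apply, Module.End.mul_apply, indOp_tmul]
  set w := twist hq U j c ((1 : Torus F) ⊗ₜ[F] T u, (1 : Torus F) ⊗ₜ[F] u) with hw
  have h2 : w.2 = c ⊗ₜ u := by
    rw [hw, twist_snd, kap_tmul, mul_one]
  rw [twist, torusLift_kt, ← h2]
  rfl

theorem indOp_weyl_right {q : F} (hq : q ≠ 0) (j : ZMod 4) (T : Module.End F U) :
    Weyl q (indOp hq j T) (kap F U (kt F (j + 1))) := by
  rw [weyl_iff' hq, indOp_mul_kt, add_sub_cancel_left]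
  change _ + kap F U ((1 - q⁻¹ ^ 2) • 1) = _
  rw [map_smul, map_one]
  rfl

theorem indOp_weyl_left {q : F} (hq : q ≠ 0) (j : ZMod 4) (T : Module.End F U) :
    Weyl q (kap F U (kt F (j + 2))) (indOp hq j T) := by
  rw [weyl_iff hq, indOp_mul_kt, add_sub_cancel_left]
  change _ + kap F U ((1 - q ^ 2) • 1) = _
  rw [map_smul, map_one]
  rfl

/-- An operator on `C ⊗ U` that commutes up to scalars with the torus and vanishes on
`1 ⊗ U` is zero. -/
theorem eq_zero_of_comm {S : Module.End F (Torus F ⊗[F] U)}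
    (hk : ∀ i, ∃ c : F, c ≠ 0 ∧ kap F U (kt F i) * S = c • (S * kap F U (kt F i)))
    (h1 : ∀ u : U, S (1 ⊗ₜ u) = 0) : S = 0 := by
  refine TensorProduct.ext' fun c u => ?_
  rw [LinearMap.zero_apply]
  refine torus_induction (LinearMap.ker (S ∘ₗ (TensorProduct.mk F (Torus F) U).flip u)) ?_ ?_ c
  · simpa using h1 u
  · intro i d hd
    obtain ⟨s, hs, h⟩ := hk i
    have h2 := LinearMap.congr_fun h (d ⊗ₜ u)
    simp only [LinearMap.mem_ker, LinearMap.comp_apply, LinearMap.flip_apply,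
      TensorProduct.mk_apply] at hd ⊢
    rw [Module.End.mul_apply, hd, map_zero, LinearMap.smul_apply, Module.End.mul_apply, kap_tmul,
      eq_comm, smul_eq_zero] at h2
    exact h2.resolve_left hs

end Extension

/-! ### From `□_q`-modules to `⊠_q`-modules -/

section Square

variable {F : Type*} [Field F]

/-- Four elements satisfying the defining relations of the algebra `□_q`: cyclically adjacent ones
satisfy the `q`-Weyl relation, opposite ones the `q`-Serre relation. -/
structure IsSquare4 {A : Type*} [Ring A] [Algebra F A] (q : F) (x : ZMod 4 → A) : Prop where
  weyl : ∀ i, Weyl q (x i) (x (i + 1))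
  serre : ∀ i, qSerre q (x i) (x (i + 2)) = 0

/-- The elements `a x_i + a⁻¹ x_{i+1}` and `b x_{i+2} + b⁻¹ x_{i+3}` satisfy the `q`-Dolan/Grady
relation. The second one, with the roles exchanged, is the case `i + 2`. -/
theorem IsSquare4.dolanGrady {A : Type*} [Ring A] [Algebra F A] {q : F} (hq : q ≠ 0)
    (hq2 : q ^ 2 ≠ 1) {x : ZMod 4 → A} (hx : IsSquare4 q x) {a b : F} (ha : a ≠ 0)
    {i j k l : ZMod 4} (hj : j = i + 1) (hk : k = i + 2) (hl : l = i + 3) :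
    qSerre q (a • x i + a⁻¹ • x j) (b • x k + b⁻¹ • x l) =
      ((q ^ 2 - q⁻¹ ^ 2) ^ 2) • ((b • x k + b⁻¹ • x l) * (a • x i + a⁻¹ • x j)
        - (a • x i + a⁻¹ • x j) * (b • x k + b⁻¹ • x l)) := by
  subst hj hk hl
  have e1 : i + 1 + 1 = i + 2 := by ring
  have e2 : i + 3 + 1 = i := by revert i; decide
  have e3 : i + 1 + 2 = i + 3 := by ring
  have h1 := dolanGrady_half hq hq2 ha (hx.weyl i) (e1 ▸ hx.weyl (i + 1)) (hx.serre i)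
  have hq2' : q⁻¹ ^ 2 ≠ 1 := by rwa [inv_pow, ne_eq, inv_eq_one]
  have h4 : qSerre q⁻¹ (x (i + 1)) (x (i + 3)) = 0 := by
    rw [qSerre_inv, ← e3]; exact hx.serre _
  have h5 : Weyl q (x (i + 3)) (x i) := by
    have := hx.weyl (i + 3)
    rwa [e2] at this
  have h2 := dolanGrady_half (inv_ne_zero hq) hq2' (inv_ne_zero ha) (hx.weyl i).inv h5.inv h4
  rw [qSerre_inv, inv_inv, inv_inv, add_comm] at h2
  rw [qSerre_add_right, h1, h2]
  simp only [mul_add, add_mul, smul_mul_assoc, mul_smul_comm, smul_add, smul_sub, smul_smul]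
  match_scalars <;> ring

open TensorProduct

variable {U : Type*} [AddCommGroup U] [Module F U]

theorem kap_kt_mul (i j : ZMod 4) (h : j = i + 2) :
    kap F U (kt F i) * kap F U (kt F j) = 1 := by
  rw [← map_mul, kt_mul' i j h, map_one]

/-- It is enough to commute up to scalars with `k_{j+1}` and `k_{j+2}`, the others being their
inverses. -/
theorem eq_zero_of_comm_two (j : ZMod 4) {S : Module.End F (Torus F ⊗[F] U)} {c d : F}
    (hc : c ≠ 0) (hd : d ≠ 0)
    (h1 : kap F U (kt F (j + 1)) * S = c • (S * kap F U (kt F (j + 1))))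
    (h2 : kap F U (kt F (j + 2)) * S = d • (S * kap F U (kt F (j + 2))))
    (h : ∀ u : U, S (1 ⊗ₜ u) = 0) : S = 0 := by
  refine eq_zero_of_comm (fun i => ?_) h
  obtain ⟨m, rfl⟩ : ∃ m, i = j + m := ⟨i - j, by ring⟩
  have e : ∀ j : ZMod 4, j + 1 = j + 3 + 2 ∧ j + 3 = j + 1 + 2 ∧ j = j + 2 + 2 := by decide
  obtain ⟨e1, e2, e3⟩ := e j
  fin_cases m
  · refine ⟨d⁻¹, inv_ne_zero hd, ?_⟩
    change kap F U (kt F (j + 0)) * S = d⁻¹ • (S * kap F U (kt F (j + 0)))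
    rw [add_zero]
    exact comm_inverse (R := Module.End F (Torus F ⊗[F] U)) hd (kap_kt_mul _ _ e3)
      (kap_kt_mul _ _ rfl) h2
  · exact ⟨c, hc, h1⟩
  · exact ⟨d, hd, h2⟩
  · exact ⟨c⁻¹, inv_ne_zero hc, comm_inverse (R := Module.End F (Torus F ⊗[F] U)) hc
      (kap_kt_mul _ _ e2) (kap_kt_mul _ _ e1) h1⟩

/-- The relations of `□_q` survive the extension to `C ⊗ U`: each defect commutes up to scalars with
the torus and vanishes on `1 ⊗ U`. -/
theorem indOp_isSquare4 {q : F} (hq : q ≠ 0) (hq2 : q ^ 2 ≠ 1) {x : ZMod 4 → Module.End F U}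
    (hx : IsSquare4 q x) : IsSquare4 q (fun j => indOp hq j (x j)) := by
  have e : ∀ j : ZMod 4, j + 1 + 2 = j + 3 ∧ j + 1 + 1 = j + 2 ∧ j + 2 + 1 = j + 3 ∧
      j + 2 + 2 = j ∧ j + 1 = j + 3 + 2 ∧ j = j + 2 + 2 ∧ j + 3 = j + 1 + 2 := by decide
  refine ⟨fun j => ?_, fun j => ?_⟩
  · obtain ⟨e1, e2, e3, e4, e5, e6, e7⟩ := e j
    refine sub_eq_zero.1 (eq_zero_of_comm_two j (pow_ne_zero 4 hq) one_ne_zero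
      (weyl_comm_inverse hq (kap_kt_mul _ _ e7) (kap_kt_mul _ _ e5) (indOp_weyl_right hq j (x j))
        (e1 ▸ indOp_weyl_left hq (j + 1) (x (j + 1))))
      (weyl_comm_triple hq (indOp_weyl_left hq j (x j))
        (e2 ▸ indOp_weyl_right hq (j + 1) (x (j + 1)))) fun u => ?_)
    have h := LinearMap.congr_fun (hx.weyl j) u
    simp only [LinearMap.sub_apply, LinearMap.smul_apply, Module.End.mul_apply,
      Module.End.one_apply] at h
    simp only [LinearMap.sub_apply, LinearMap.smul_apply, Module.End.mul_apply,
      Module.End.one_apply, indOp_one_tmul, ← tmul_smul, ← tmul_sub, h, sub_self]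
  · obtain ⟨e1, e2, e3, e4, e5, e6, e7⟩ := e j
    have h4 : Weyl q (kap F U (kt F j)) (indOp hq (j + 2) (x (j + 2))) := by
      have := indOp_weyl_left hq (j + 2) (x (j + 2))
      rwa [e4] at this
    refine eq_zero_of_comm_two j (pow_ne_zero 4 hq) (pow_ne_zero 4 (inv_ne_zero hq))
      (serre_comm_inverse hq hq2 (kap_kt_mul _ _ e7) (kap_kt_mul _ _ e5)
        (indOp_weyl_right hq j (x j)) (e3 ▸ indOp_weyl_right hq (j + 2) (x (j + 2))))
      (serre_comm_inverse' hq hq2 (kap_kt_mul _ _ e6) (kap_kt_mul _ _ rfl)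
        (indOp_weyl_left hq j (x j)) h4) fun u => ?_
    have h := LinearMap.congr_fun (hx.serre j) u
    rw [qSerre_eq hq hq2] at h ⊢
    simp only [LinearMap.sub_apply, LinearMap.add_apply, LinearMap.smul_apply,
      Module.End.mul_apply, LinearMap.zero_apply] at h
    simp only [LinearMap.sub_apply, LinearMap.add_apply, LinearMap.smul_apply,
      Module.End.mul_apply, indOp_one_tmul, ← tmul_smul, ← tmul_sub, ← tmul_add, h, tmul_zero]

/-- The operators on `C ⊗ U` by which the generators of `⊠_q` act. -/
def tetGen {q : F} (hq : q ≠ 0) (x : ZMod 4 → Module.End F U) (g : TetGen) :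
    Module.End F (Torus F ⊗[F] U) :=
  if g.1.2 - g.1.1 = 1 then indOp hq g.1.1 (x g.1.1) else kap F U (kt F g.1.1)

theorem lift_tetGen_one {q : F} (hq : q ≠ 0) (x : ZMod 4 → Module.End F U) (i j : ZMod 4)
    (h : j - i = 1) :
    FreeAlgebra.lift F (tetGen hq x) (tg F i j (Or.inl h)) = indOp hq i (x i) := by
  rw [tg, FreeAlgebra.lift_ι_apply, tetGen, if_pos h]

theorem lift_tetGen_two {q : F} (hq : q ≠ 0) (x : ZMod 4 → Module.End F U) (i j : ZMod 4)
    (h : j - i = 2) :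
    FreeAlgebra.lift F (tetGen hq x) (tg F i j (Or.inr h)) = kap F U (kt F i) := by
  rw [tg, FreeAlgebra.lift_ι_apply, tetGen, if_neg]
  change ¬ (j - i = 1)
  rw [h]
  decide

theorem map_qSerre {A B : Type*} [Ring A] [Algebra F A] [Ring B] [Algebra F B] (φ : A →ₐ[F] B)
    (q : F) (u v : A) : φ (qSerre q u v) = qSerre q (φ u) (φ v) := by
  simp only [qSerre, map_sub, map_add, map_smul, map_mul, map_pow]

theorem weyl_inv_smul {A : Type*} [Ring A] [Algebra F A] {q : F} (hq : q ≠ 0) (hq2 : q ^ 2 ≠ 1)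
    {u v : A} : (q - q⁻¹)⁻¹ • (q • (u * v) - q⁻¹ • (v * u)) = 1 ↔ Weyl q u v := by
  have h1 : q - q⁻¹ ≠ 0 := by
    intro h
    apply hq2
    field_simp at h
    linear_combination h
  rw [Weyl, inv_smul_eq_iff₀ h1]

/-- The `⊠_q`-module structure on `C ⊗ U` induced by a `□_q`-module structure on `U`. -/
def tetRep {q : F} (hq : q ≠ 0) (hq2 : q ^ 2 ≠ 1) {x : ZMod 4 → Module.End F U}
    (hx : IsSquare4 q x) : Tet F q →ₐ[F] Module.End F (Torus F ⊗[F] U) :=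
  RingQuot.liftAlgHom F ⟨FreeAlgebra.lift F (tetGen hq x), by
    intro u v h
    have hE := indOp_isSquare4 hq hq2 hx
    cases h with
    | inv i j h h' =>
      rw [map_mul, map_one, lift_tetGen_two hq x i j h, lift_tetGen_two hq x j i h']
      exact kap_kt_mul _ _ (by rw [← h]; ring)
    | weyl11 i j k h1 h2 =>
      simp only [map_smul, map_sub, map_mul, map_one]
      refine (weyl_inv_smul (A := Module.End F (Torus F ⊗[F] U)) hq hq2).2 ?_
      rw [lift_tetGen_one hq x i j h1, lift_tetGen_one hq x j k h2,
        show j = i + 1 by rw [← h1]; ring]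
      exact hE.weyl i
    | weyl12 i j k h1 h2 =>
      simp only [map_smul, map_sub, map_mul, map_one]
      refine (weyl_inv_smul (A := Module.End F (Torus F ⊗[F] U)) hq hq2).2 ?_
      rw [lift_tetGen_one hq x i j h1, lift_tetGen_two hq x j k h2,
        show j = i + 1 by rw [← h1]; ring]
      exact indOp_weyl_right hq i (x i)
    | weyl21 i j k h1 h2 =>
      simp only [map_smul, map_sub, map_mul, map_one]
      refine (weyl_inv_smul (A := Module.End F (Torus F ⊗[F] U)) hq hq2).2 ?_
      rw [lift_tetGen_two hq x i j h1, lift_tetGen_one hq x j k h2]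
      have e : ∀ i j : ZMod 4, j - i = 2 → i = j + 2 := by decide
      rw [e i j h1]
      exact indOp_weyl_left hq j (x j)
    | serre i j k l h1 h2 h3 =>
      have e : ∀ i j k : ZMod 4, j - i = 1 → k - j = 1 → k = i + 2 := by decide
      rw [map_zero]
      refine (map_qSerre (B := Module.End F (Torus F ⊗[F] U))
        (FreeAlgebra.lift F (tetGen hq x)) q _ _).trans ?_
      rw [lift_tetGen_one hq x i j h1, lift_tetGen_one hq x k l h3, e i j k h1 h2]
      exact hE.serre i⟩

theorem tetRep_xt {q : F} (hq : q ≠ 0) (hq2 : q ^ 2 ≠ 1) {x : ZMod 4 → Module.End F U}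
    (hx : IsSquare4 q x) (i j : ZMod 4) (h : j - i = 1) (u : U) :
    tetRep hq hq2 hx (xt F q i j (Or.inl h)) (1 ⊗ₜ u) = 1 ⊗ₜ x i u := by
  rw [xt, tetRep, RingQuot.liftAlgHom_mkAlgHom_apply, lift_tetGen_one hq x i j h, indOp_one_tmul]

theorem one_tmul_injective {u v : U} (h : (1 : Torus F) ⊗ₜ[F] u = 1 ⊗ₜ v) : u = v := by
  have := congrArg (TensorProduct.lid F U ∘ (LinearMap.rTensor U
    (torusLift (F := F) (fun _ => (1 : F)) (fun _ => one_mul 1)).toLinearMap)) h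
  simpa using this

end Square

/-! ### Homomorphisms out of `O_q` -/

section OnsagerHom

variable {F : Type*} [Field F]

/-- The elements `x_{i,i+1}` of `⊠_q` satisfy the relations of `□_q`. -/
theorem xt_isSquare4 {q : F} (hq : q ≠ 0) (hq2 : q ^ 2 ≠ 1) :
    IsSquare4 q (fun i => xt F q i (i + 1) (Or.inl (add_sub_cancel_left i 1))) := by
  refine ⟨fun i => ?_, fun i => ?_⟩
  · rw [← weyl_inv_smul hq hq2]
    have := RingQuot.mkAlgHom_rel F (TetRel.weyl11 (F := F) (q := q) i (i + 1) (i + 1 + 1)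
      (add_sub_cancel_left _ 1) (add_sub_cancel_left _ 1))
    simp only [map_smul, map_sub, map_mul, map_one] at this
    exact this
  · have := RingQuot.mkAlgHom_rel F (TetRel.serre (F := F) (q := q) i (i + 1) (i + 2) (i + 2 + 1)
      (add_sub_cancel_left _ 1) (by ring) (add_sub_cancel_left _ 1))
    rw [map_zero, map_qSerre] at this
    exact this

/-- The universal property of `O_q`. -/
def onsagerLift {A : Type*} [Ring A] [Algebra F A] {q : F} (u v : A)
    (h1 : qSerre q u v = ((q ^ 2 - q⁻¹ ^ 2) ^ 2) • (v * u - u * v))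
    (h2 : qSerre q v u = ((q ^ 2 - q⁻¹ ^ 2) ^ 2) • (u * v - v * u)) : Onsager F q →ₐ[F] A :=
  RingQuot.liftAlgHom F ⟨FreeAlgebra.lift F ![u, v], by
    intro s t h
    cases h
    · simpa [qSerre] using h1
    · simpa [qSerre] using h2⟩

theorem onsagerLift_mk {A : Type*} [Ring A] [Algebra F A] {q : F} (u v : A)
    (h1 : qSerre q u v = ((q ^ 2 - q⁻¹ ^ 2) ^ 2) • (v * u - u * v))
    (h2 : qSerre q v u = ((q ^ 2 - q⁻¹ ^ 2) ^ 2) • (u * v - v * u)) (p : FreeAlgebra F (Fin 2)) :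
    onsagerLift u v h1 h2 (RingQuot.mkAlgHom F (OnsagerRel F q) p)
      = FreeAlgebra.lift F ![u, v] p := by
  rw [onsagerLift, RingQuot.liftAlgHom_mkAlgHom_apply]

end OnsagerHom

/-! ### The algebra `U_q^+` as a `□_q`-module -/

section PositivePart

variable {F : Type*} [Field F]

/-- The defining relations of `U_q^+`: the two `q`-Serre relations. -/
inductive UpRel (F : Type*) [Field F] (q : F) :
    FreeAlgebra F (Fin 2) → FreeAlgebra F (Fin 2) → Prop
  | S1 : UpRel F q (qSerre q (FreeAlgebra.ι F 0) (FreeAlgebra.ι F 1)) 0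
  | S2 : UpRel F q (qSerre q (FreeAlgebra.ι F 1) (FreeAlgebra.ι F 0)) 0

/-- The positive part `U_q^+` of quantum affine `sl₂`, generated by `X` and `Y` subject to the
`q`-Serre relations. -/
def Up (F : Type*) [Field F] (q : F) := RingQuot (UpRel F q)

instance (q : F) : Ring (Up F q) := inferInstanceAs (Ring (RingQuot (UpRel F q)))

instance (q : F) : Algebra F (Up F q) := inferInstanceAs (Algebra F (RingQuot (UpRel F q)))

/-- The quotient map onto `U_q^+`. -/
def upMk (q : F) : FreeAlgebra F (Fin 2) →ₐ[F] Up F q := RingQuot.mkAlgHom F (UpRel F q)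

/-- The generator `X` of `U_q^+`. -/
def upX (q : F) : Up F q := upMk q (FreeAlgebra.ι F 0)

/-- The generator `Y` of `U_q^+`. -/
def upY (q : F) : Up F q := upMk q (FreeAlgebra.ι F 1)

theorem upX_serre (q : F) : qSerre q (upX q) (upY q) = 0 := by
  have h : upMk q _ = upMk q _ := RingQuot.mkAlgHom_rel F (UpRel.S1 (F := F) (q := q))
  rwa [map_zero, map_qSerre] at h

theorem upY_serre (q : F) : qSerre q (upY q) (upX q) = 0 := by
  have h : upMk q _ = upMk q _ := RingQuot.mkAlgHom_rel F (UpRel.S2 (F := F) (q := q))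
  rwa [map_zero, map_qSerre] at h

/-- The universal property of `U_q^+`. -/
def upLift {A : Type*} [Ring A] [Algebra F A] {q : F} (u v : A)
    (h1 : qSerre q u v = 0) (h2 : qSerre q v u = 0) : Up F q →ₐ[F] A :=
  RingQuot.liftAlgHom F (s := UpRel F q) ⟨FreeAlgebra.lift F ![u, v], by
    intro s t h
    cases h
    · rw [map_qSerre, map_zero]; simpa using h1
    · rw [map_qSerre, map_zero]; simpa using h2⟩

theorem upLift_mk {A : Type*} [Ring A] [Algebra F A] {q : F} (u v : A)
    (h1 : qSerre q u v = 0) (h2 : qSerre q v u = 0) (p : FreeAlgebra F (Fin 2)) :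
    upLift u v h1 h2 (upMk q p) = FreeAlgebra.lift F ![u, v] p := by
  change RingQuot.liftAlgHom F _ (RingQuot.mkAlgHom F (UpRel F q) p) = _
  rw [RingQuot.liftAlgHom_mkAlgHom_apply]

theorem upLift_upX {A : Type*} [Ring A] [Algebra F A] {q : F} (u v : A)
    (h1 : qSerre q u v = 0) (h2 : qSerre q v u = 0) : upLift u v h1 h2 (upX q) = u := by
  rw [upX, upLift_mk]; simp

theorem upLift_upY {A : Type*} [Ring A] [Algebra F A] {q : F} (u v : A)
    (h1 : qSerre q u v = 0) (h2 : qSerre q v u = 0) : upLift u v h1 h2 (upY q) = v := by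
  rw [upY, upLift_mk]; simp

theorem up_induction {q : F} (N : Submodule F (Up F q)) (h1 : 1 ∈ N)
    (hX : ∀ c ∈ N, upX q * c ∈ N) (hY : ∀ c ∈ N, upY q * c ∈ N) (c : Up F q) : c ∈ N := by
  refine ringQuot_induction (UpRel F q) N h1 (fun i => ?_) c
  fin_cases i
  · exact hX
  · exact hY

theorem up_one_ne_zero (q : F) : (1 : Up F q) ≠ 0 := by
  intro h
  have h0 : qSerre q (0 : F) 0 = 0 := by simp [qSerre]
  simpa using congrArg (upLift (0 : F) 0 h0 h0) h

/-- The twisted Leibniz rule `D (u v) = c u D(v) + (1 - c) v` as an operator on pairs `(D v, v)`. -/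
def skewGen {A : Type*} [Ring A] [Algebra F A] (c : F) (u : A) : Module.End F (A × A) :=
  LinearMap.prod
    (c • (LinearMap.mulLeft F u ∘ₗ LinearMap.fst F A A) + (1 - c) • LinearMap.snd F A A)
    (LinearMap.mulLeft F u ∘ₗ LinearMap.snd F A A)

theorem skewGen_apply {A : Type*} [Ring A] [Algebra F A] (c : F) (u : A) (w : A × A) :
    skewGen c u w = (c • (u * w.1) + (1 - c) • w.2, u * w.2) := rfl

/-- The twisted Leibniz rules for `D X` and `D Y` are compatible with the `q`-Serre relations. -/
theorem skewGen_serre {A : Type*} [Ring A] [Algebra F A] {s : F} (hs : s ≠ 0) (hs2 : s ^ 2 ≠ 1)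
    {u v : A} (h : qSerre s u v = 0) :
    qSerre s (skewGen (s ^ 2) u) (skewGen (s⁻¹ ^ 2) v) = 0 := by
  rw [qSerre_eq hs hs2] at h ⊢
  refine LinearMap.ext fun w => ?_
  have h1 := congrArg (fun z => s ^ 4 • (z * w.1)) h
  have h2 := congrArg (fun z => z * w.2) h
  simp only [zero_mul, smul_zero] at h1 h2
  refine Prod.ext ?_ ?_
  · refine Eq.trans ?_ h1
    simp only [LinearMap.sub_apply, LinearMap.add_apply, LinearMap.smul_apply,
      Module.End.mul_apply, skewGen_apply, Prod.fst_sub, Prod.fst_add, Prod.smul_fst,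
      mul_add, add_mul, sub_mul, smul_mul_assoc, mul_smul_comm, mul_assoc]
    match_scalars <;> field_simp <;> ring
  · refine Eq.trans ?_ h2
    simp only [LinearMap.sub_apply, LinearMap.add_apply, LinearMap.smul_apply,
      Module.End.mul_apply, skewGen_apply, Prod.snd_sub, Prod.snd_add, Prod.smul_snd,
      add_mul, sub_mul, smul_mul_assoc, mul_assoc]

theorem skewGen_serre' {A : Type*} [Ring A] [Algebra F A] {s : F} (hs : s ≠ 0) (hs2 : s ^ 2 ≠ 1)
    {u v : A} (h : qSerre s v u = 0) :
    qSerre s (skewGen (s⁻¹ ^ 2) v) (skewGen (s ^ 2) u) = 0 := by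
  rw [← qSerre_inv] at h ⊢
  have := skewGen_serre (inv_ne_zero hs) (by rwa [inv_pow, ne_eq, inv_eq_one]) h
  rwa [inv_inv] at this

/-- The action of `U_q^+` on pairs `(D v, v)` for a skew derivation `D` with parameter `s`, where
`s` is `q` or `q⁻¹`. -/
def skewRep {q s : F} (hs : s ≠ 0) (hs2 : s ^ 2 ≠ 1) (h : s = q ∨ s = q⁻¹) :
    Up F q →ₐ[F] Module.End F (Up F q × Up F q) :=
  have e : ∀ {A : Type _} [Ring A] [Algebra F A] (u v : A), qSerre q u v = qSerre s u v := by
    intro A _ _ u v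
    rcases h with rfl | rfl
    · rfl
    · rw [qSerre_inv]
  upLift (skewGen (s ^ 2) (upX q)) (skewGen (s⁻¹ ^ 2) (upY q))
    ((e _ _).trans (skewGen_serre hs hs2 ((e _ _).symm.trans (upX_serre q))))
    ((e _ _).trans (skewGen_serre' hs hs2 ((e _ _).symm.trans (upY_serre q))))

theorem skewRep_snd {q s : F} (hs : s ≠ 0) (hs2 : s ^ 2 ≠ 1) (h : s = q ∨ s = q⁻¹)
    (c : Up F q) : (skewRep hs hs2 h c (0, 1)).2 = c := by
  refine up_induction (LinearMap.eqLocus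
    (LinearMap.snd F (Up F q) (Up F q) ∘ₗ LinearMap.applyₗ ((0 : Up F q), (1 : Up F q)) ∘ₗ
      (skewRep hs hs2 h).toLinearMap) LinearMap.id) ?_ ?_ ?_ c
  · simp
  · intro c hc
    simp only [LinearMap.mem_eqLocus, LinearMap.comp_apply, AlgHom.toLinearMap_apply,
      LinearMap.applyₗ_apply_apply, LinearMap.snd_apply, map_mul, Module.End.mul_apply,
      LinearMap.id_apply] at hc ⊢
    rw [skewRep, upLift_upX, skewGen_apply]
    exact congrArg (upX q * ·) hc
  · intro c hc
    simp only [LinearMap.mem_eqLocus, LinearMap.comp_apply, AlgHom.toLinearMap_apply,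
      LinearMap.applyₗ_apply_apply, LinearMap.snd_apply, map_mul, Module.End.mul_apply,
      LinearMap.id_apply] at hc ⊢
    rw [skewRep, upLift_upY, skewGen_apply]
    exact congrArg (upY q * ·) hc

/-- The skew derivation `D` of `U_q^+` with `D 1 = 0`, `D (X u) = s² X D u + (1 - s²) u` and
`D (Y u) = s⁻² Y D u + (1 - s⁻²) u`. -/
def skewDer {q s : F} (hs : s ≠ 0) (hs2 : s ^ 2 ≠ 1) (h : s = q ∨ s = q⁻¹) :
    Module.End F (Up F q) :=
  LinearMap.fst F (Up F q) (Up F q) ∘ₗ LinearMap.applyₗ ((0 : Up F q), (1 : Up F q)) ∘ₗ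
      (skewRep hs hs2 h).toLinearMap

section

variable {q s : F} (hs : s ≠ 0) (hs2 : s ^ 2 ≠ 1) (h : s = q ∨ s = q⁻¹)

theorem skewDer_apply (c : Up F q) :
    skewDer hs hs2 h c = (skewRep hs hs2 h c (0, 1)).1 := rfl

theorem skewDer_one : skewDer hs hs2 h 1 = 0 := by
  rw [skewDer_apply, map_one, Module.End.one_apply]

theorem skewDer_upX (c : Up F q) : skewDer hs hs2 h (upX q * c) =
    s ^ 2 • (upX q * skewDer hs hs2 h c) + (1 - s ^ 2) • c := by
  rw [skewDer_apply, map_mul, Module.End.mul_apply]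
  nth_rw 1 [skewRep]
  rw [upLift_upX, skewGen_apply, skewRep_snd]
  rfl

theorem skewDer_upY (c : Up F q) : skewDer hs hs2 h (upY q * c) =
    s⁻¹ ^ 2 • (upY q * skewDer hs hs2 h c) + (1 - s⁻¹ ^ 2) • c := by
  rw [skewDer_apply, map_mul, Module.End.mul_apply]
  nth_rw 1 [skewRep]
  rw [upLift_upY, skewGen_apply, skewRep_snd]
  rfl

end

/-- An operator on `U_q^+` that kills `1` and commutes up to scalars with the left multiplications by
the generators is zero. -/
theorem up_end_eq_zero {q : F} {R : Module.End F (Up F q)} {c d : F} (hc : c ≠ 0) (hd : d ≠ 0)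
    (h1 : LinearMap.mulLeft F (upX q) * R = c • (R * LinearMap.mulLeft F (upX q)))
    (h2 : LinearMap.mulLeft F (upY q) * R = d • (R * LinearMap.mulLeft F (upY q)))
    (h : R 1 = 0) : R = 0 := by
  refine LinearMap.ext fun u => ?_
  refine up_induction (LinearMap.ker R) h (fun u hu => ?_) (fun u hu => ?_) u
  · have := LinearMap.congr_fun h1 u
    rw [LinearMap.mem_ker] at hu ⊢
    rw [Module.End.mul_apply, hu, map_zero, LinearMap.smul_apply, eq_comm, smul_eq_zero] at this
    exact this.resolve_left hc
  · have := LinearMap.congr_fun h2 u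
    rw [LinearMap.mem_ker] at hu ⊢
    rw [Module.End.mul_apply, hu, map_zero, LinearMap.smul_apply, eq_comm, smul_eq_zero] at this
    exact this.resolve_left hd

theorem inv_sq_ne_one {q : F} (hq2 : q ^ 2 ≠ 1) : q⁻¹ ^ 2 ≠ 1 := by
  rwa [inv_pow, ne_eq, inv_eq_one]

/-- The `□_q`-module structure on `U_q^+`: `x_3` and `x_1` multiply by `X` and `Y` from the left, and
`x_0`, `x_2` are the skew derivations with parameters `q`, `q⁻¹`. -/
def squareOps {q : F} (hq : q ≠ 0) (hq2 : q ^ 2 ≠ 1) : ZMod 4 → Module.End F (Up F q)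
  | 0 => skewDer hq hq2 (Or.inl rfl)
  | 1 => LinearMap.mulLeft F (upY q)
  | 2 => skewDer (inv_ne_zero hq) (inv_sq_ne_one hq2) (Or.inr rfl)
  | 3 => LinearMap.mulLeft F (upX q)

theorem mulLeft_qSerre {A : Type*} [Ring A] [Algebra F A] (q : F) (u v : A) :
    qSerre q (LinearMap.mulLeft F u) (LinearMap.mulLeft F v) =
      LinearMap.mulLeft F (qSerre q u v) :=
  (map_qSerre (Algebra.lmul F A) q u v).symm

theorem squareOps_isSquare4 {q : F} (hq : q ≠ 0) (hq2 : q ^ 2 ≠ 1) :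
    IsSquare4 q (squareOps hq hq2) := by
  have w3 : Weyl q (squareOps hq hq2 3) (squareOps hq hq2 0) :=
    (weyl_iff hq).2 (LinearMap.ext fun u => skewDer_upX hq hq2 (Or.inl rfl) u)
  have w0 : Weyl q (squareOps hq hq2 0) (squareOps hq hq2 1) :=
    (weyl_iff' hq).2 (LinearMap.ext fun u => skewDer_upY hq hq2 (Or.inl rfl) u)
  have w1 : Weyl q (squareOps hq hq2 1) (squareOps hq hq2 2) := by
    refine (weyl_iff hq).2 (LinearMap.ext fun u => ?_)
    have := skewDer_upY (inv_ne_zero hq) (inv_sq_ne_one hq2) (Or.inr rfl) u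
    rw [inv_inv] at this
    exact this
  have w2 : Weyl q (squareOps hq hq2 2) (squareOps hq hq2 3) :=
    (weyl_iff' hq).2 (LinearMap.ext fun u =>
      skewDer_upX (inv_ne_zero hq) (inv_sq_ne_one hq2) (Or.inr rfl) u)
  have z0 : squareOps hq hq2 0 1 = 0 := skewDer_one hq hq2 (Or.inl rfl)
  have z2 : squareOps hq hq2 2 1 = 0 := skewDer_one _ _ _
  have k1 := pow_ne_zero 4 hq
  have k2 := pow_ne_zero 4 (inv_ne_zero hq)
  have v : ∀ S T : Module.End F (Up F q), S 1 = 0 → T 1 = 0 → qSerre q S T 1 = 0 := by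
    intro S T hS hT
    rw [qSerre_eq hq hq2]
    simp [hS, hT]
  refine ⟨fun i => ?_, fun i => ?_⟩
  · fin_cases i
    · exact w0
    · exact w1
    · exact w2
    · exact w3
  · fin_cases i
    · exact up_end_eq_zero k2 k1 (serre_comm_middle' hq hq2 w2 w3)
        (serre_comm_middle hq hq2 w0 w1) (v _ _ z0 z2)
    · refine (mulLeft_qSerre q (upY q) (upX q)).trans ?_
      rw [upY_serre, LinearMap.mulLeft_zero_eq_zero]
    · exact up_end_eq_zero k1 k2 (serre_comm_middle hq hq2 w2 w3)
        (serre_comm_middle' hq hq2 w0 w1) (v _ _ z2 z0)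
    · refine (mulLeft_qSerre q (upX q) (upY q)).trans ?_
      rw [upX_serre, LinearMap.mulLeft_zero_eq_zero]

end PositivePart

/-! ### Degree filtration of the free algebra -/

section Filtration

variable {F : Type*} [Field F]

/-- The span of the two generators of the free algebra. -/
def genSpan (F : Type*) [Field F] : Submodule F (FreeAlgebra F (Fin 2)) :=
  Submodule.span F (Set.range (FreeAlgebra.ι F))

theorem ι_mem_genSpan (i : Fin 2) : FreeAlgebra.ι F i ∈ genSpan F :=
  Submodule.subset_span ⟨i, rfl⟩

/-- Noncommutative polynomials of degree at most `n`; the homogeneous ones of degree `n` form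
`genSpan F ^ n`. -/
def degLE (F : Type*) [Field F] (n : ℕ) : Submodule F (FreeAlgebra F (Fin 2)) :=
  (1 ⊔ genSpan F) ^ n

theorem degLE_mono : Monotone (degLE F) := by
  refine monotone_nat_of_le_succ fun n => ?_
  rw [degLE, degLE, pow_succ']
  calc (1 ⊔ genSpan F) ^ n = 1 * (1 ⊔ genSpan F) ^ n := (one_mul _).symm
    _ ≤ _ := mul_le_mul' le_sup_left le_rfl

theorem exists_mem_degLE (p : FreeAlgebra F (Fin 2)) : ∃ n, p ∈ degLE F n := by
  induction p using FreeAlgebra.induction with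
  | grade0 s =>
    refine ⟨0, ?_⟩
    rw [degLE, pow_zero]
    exact Submodule.algebraMap_mem s
  | grade1 i =>
    refine ⟨1, ?_⟩
    rw [degLE, pow_one]
    exact Submodule.mem_sup_right (ι_mem_genSpan i)
  | mul a b ha hb =>
    obtain ⟨m, hm⟩ := ha
    obtain ⟨n, hn⟩ := hb
    refine ⟨m + n, ?_⟩
    rw [degLE, pow_add]
    exact Submodule.mul_mem_mul hm hn
  | add a b ha hb =>
    obtain ⟨m, hm⟩ := ha
    obtain ⟨n, hn⟩ := hb
    exact ⟨max m n, Submodule.add_mem _ (degLE_mono (le_max_left m n) hm)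
      (degLE_mono (le_max_right m n) hn)⟩

/-- Splitting off the homogeneous part of top degree. -/
theorem degLE_succ_le (n : ℕ) : degLE F (n + 1) ≤ genSpan F ^ (n + 1) ⊔ degLE F n := by
  induction n with
  | zero => rw [degLE, degLE, zero_add, pow_one, pow_one, pow_zero, sup_comm]
  | succ n ih =>
    have h1 : degLE F (n + 1 + 1) = degLE F (n + 1) ⊔ genSpan F * degLE F (n + 1) := by
      rw [degLE, pow_succ', Submodule.sup_mul, one_mul]; rfl
    have h2 : genSpan F * degLE F n ≤ degLE F (n + 1) := by
      rw [degLE, degLE, pow_succ' _ n]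
      exact mul_le_mul' le_sup_right le_rfl
    rw [h1]
    refine sup_le le_sup_right ((mul_le_mul' le_rfl ih).trans ?_)
    rw [Submodule.mul_sup, ← pow_succ']
    exact sup_le_sup_left h2 _

theorem genSpan_pow_induction {N : ℕ → Submodule F (FreeAlgebra F (Fin 2))} (h1 : 1 ∈ N 0)
    (hmul : ∀ n i, ∀ p ∈ N n, FreeAlgebra.ι F i * p ∈ N (n + 1)) (n : ℕ) :
    genSpan F ^ n ≤ N n := by
  induction n with
  | zero =>
    rw [pow_zero, Submodule.one_le]
    exact h1
  | succ n ih =>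
    rw [pow_succ', genSpan, Submodule.mul_le]
    intro g hg p hp
    induction hg using Submodule.span_induction with
    | mem x hx => obtain ⟨i, rfl⟩ := hx; exact hmul n i p (ih hp)
    | zero => rw [zero_mul]; exact zero_mem _
    | add x y _ _ hx hy => rw [add_mul]; exact add_mem hx hy
    | smul s x _ hx => rw [smul_mul_assoc]; exact Submodule.smul_mem _ s hx

theorem degLE_induction {N : ℕ → Submodule F (FreeAlgebra F (Fin 2))} (h1 : 1 ∈ N 0)
    (hmono : ∀ n, N n ≤ N (n + 1))
    (hmul : ∀ n i, ∀ p ∈ N n, FreeAlgebra.ι F i * p ∈ N (n + 1)) (n : ℕ) : degLE F n ≤ N n := by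
  induction n with
  | zero =>
    rw [degLE, pow_zero, Submodule.one_le]
    exact h1
  | succ n ih =>
    refine (degLE_succ_le n).trans (sup_le (genSpan_pow_induction h1 hmul (n + 1))
      (ih.trans (hmono n)))

end Filtration

/-! ### Leading terms of the action on `U_q^+` -/

section LeadingTerm

open Polynomial

variable {F : Type*} [Field F]

/-- The Serre expression is homogeneous in each argument. -/
theorem qSerre_smul_smul {A : Type*} [Ring A] [Algebra F A] (q c d : F) (u v : A) :
    qSerre q (c • u) (d • v) = (c ^ 3 * d) • qSerre q u v := by
  simp only [qSerre, _root_.smul_pow, smul_mul_assoc, mul_smul_comm, smul_smul, smul_sub, smul_add]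
  match_scalars <;> ring

theorem qSerre_monomial {A : Type*} [Ring A] [Algebra F A] (q : F) (u v : A) :
    qSerre q (monomial 1 u) (monomial 1 v) = monomial 4 (qSerre q u v) := by
  simp only [qSerre, monomial_pow, monomial_mul_monomial, smul_monomial, map_sub, map_add, one_mul]

/-- The homomorphism `U_q^+ → U_q^+[t]`, `X ↦ X t`, `Y ↦ Y t`, whose coefficients are the
homogeneous components. -/
def degHom (F : Type*) [Field F] (q : F) : Up F q →ₐ[F] (Up F q)[X] :=
  upLift (monomial 1 (upX q)) (monomial 1 (upY q))
    (by rw [qSerre_monomial, upX_serre, map_zero]) (by rw [qSerre_monomial, upY_serre, map_zero])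

theorem coeff_zero_monomial_one_mul {A : Type*} [Ring A] (u : A) (f : A[X]) :
    (monomial 1 u * f).coeff 0 = 0 := by
  rw [mul_coeff_zero, coeff_monomial, if_neg one_ne_zero, zero_mul]

theorem degHom_upX (q : F) (c : Up F q) :
    degHom F q (upX q * c) = monomial 1 (upX q) * degHom F q c := by
  rw [map_mul]
  nth_rw 1 [degHom]
  rw [upLift_upX]

theorem degHom_upY (q : F) (c : Up F q) :
    degHom F q (upY q * c) = monomial 1 (upY q) * degHom F q c := by
  rw [map_mul]
  nth_rw 1 [degHom]
  rw [upLift_upY]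

/-- A skew derivation lowers the degree by one. The factor `t` on the left makes the statement
cover the component of degree zero as well. -/
theorem coeff_degHom_skewDer {q s : F} (hs : s ≠ 0) (hs2 : s ^ 2 ≠ 1) (h : s = q ∨ s = q⁻¹)
    (c : Up F q) (k : ℕ) : (monomial 1 1 * degHom F q (skewDer hs hs2 h c)).coeff k =
      skewDer hs hs2 h ((degHom F q c).coeff k) := by
  have comm : ∀ (u : Up F q) f, monomial 1 1 * (monomial 1 u * f) =
      monomial 1 u * (monomial 1 1 * f) := by
    intro u f
    rw [← mul_assoc, ← mul_assoc, monomial_mul_monomial, monomial_mul_monomial, one_mul, mul_one]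
  let N : Submodule F (Up F q) :=
    { carrier := {c | ∀ k, (monomial 1 1 * degHom F q (skewDer hs hs2 h c)).coeff k =
        skewDer hs hs2 h ((degHom F q c).coeff k)}
      add_mem' := by
        intro c d hc hd k
        rw [map_add, map_add, map_add, mul_add, coeff_add, coeff_add, map_add, hc k, hd k]
      zero_mem' := by intro k; simp only [map_zero, mul_zero, coeff_zero]
      smul_mem' := by
        intro x c hc k
        rw [map_smul, map_smul, map_smul, mul_smul_comm, coeff_smul, coeff_smul, map_smul, hc k] }
  have key : c ∈ N := by
    refine up_induction N ?_ ?_ ?_ c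
    · intro k
      rw [skewDer_one, map_zero, mul_zero, coeff_zero, map_one, coeff_one]
      split_ifs
      · rw [skewDer_one]
      · rw [map_zero]
    · intro c hc k
      rw [skewDer_upX, map_add, map_smul, map_smul, degHom_upX, degHom_upX, mul_add,
        mul_smul_comm, mul_smul_comm, comm, coeff_add, coeff_smul, coeff_smul]
      cases k with
      | zero => simp only [coeff_zero_monomial_one_mul, smul_zero, map_zero, add_zero]
      | succ k =>
        rw [coeff_monomial_mul, coeff_monomial_mul, coeff_monomial_mul, one_mul, hc k,
          skewDer_upX]
    · intro c hc k
      rw [skewDer_upY, map_add, map_smul, map_smul, degHom_upY, degHom_upY, mul_add,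
        mul_smul_comm, mul_smul_comm, comm, coeff_add, coeff_smul, coeff_smul]
      cases k with
      | zero => simp only [coeff_zero_monomial_one_mul, smul_zero, map_zero, add_zero]
      | succ k =>
        rw [coeff_monomial_mul, coeff_monomial_mul, coeff_monomial_mul, one_mul, hc k,
          skewDer_upY]
  exact key k

/-- Elements of `U_q^+` of degree less than `n`. -/
def degLT (q : F) (n : ℕ) : Submodule F (Up F q) where
  carrier := {u | ∀ k, n ≤ k → (degHom F q u).coeff k = 0}
  add_mem' := by
    intro u v hu hv k hk
    rw [map_add, coeff_add, hu k hk, hv k hk, add_zero]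
  zero_mem' := by intro k _; rw [map_zero, coeff_zero]
  smul_mem' := by
    intro c u hu k hk
    rw [map_smul, coeff_smul, hu k hk, smul_zero]

theorem mem_degLT {q : F} {n : ℕ} {u : Up F q} :
    u ∈ degLT q n ↔ ∀ k, n ≤ k → (degHom F q u).coeff k = 0 := Iff.rfl

theorem skewDer_mem_degLT {q s : F} (hs : s ≠ 0) (hs2 : s ^ 2 ≠ 1) (h : s = q ∨ s = q⁻¹)
    {n : ℕ} {u : Up F q} (hu : u ∈ degLT q (n + 1)) : skewDer hs hs2 h u ∈ degLT q n := by
  intro k hk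
  have := coeff_degHom_skewDer hs hs2 h u (k + 1)
  rwa [coeff_monomial_mul, one_mul, hu (k + 1) (by omega), map_zero] at this

theorem degLT_mono {q : F} : Monotone (degLT q) := fun _ _ hmn _ hu k hk => hu k (hmn.trans hk)

theorem upX_mul_mem_degLT {q : F} {n : ℕ} {u : Up F q} (hu : u ∈ degLT q n) :
    upX q * u ∈ degLT q (n + 1) := by
  intro k hk
  obtain ⟨k, rfl⟩ : ∃ l, k = l + 1 := ⟨k - 1, by omega⟩
  rw [degHom_upX, coeff_monomial_mul, hu k (by omega), mul_zero]

theorem upY_mul_mem_degLT {q : F} {n : ℕ} {u : Up F q} (hu : u ∈ degLT q n) :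
    upY q * u ∈ degLT q (n + 1) := by
  intro k hk
  obtain ⟨k, rfl⟩ : ∃ l, k = l + 1 := ⟨k - 1, by omega⟩
  rw [degHom_upY, coeff_monomial_mul, hu k (by omega), mul_zero]

variable {q : F} (hq : q ≠ 0) (hq2 : q ^ 2 ≠ 1)

/-- The operators `a x_3 + a⁻¹ x_0` and `b x_1 + b⁻¹ x_2` on `U_q^+` by which `A` and `B` act. -/
def ladder (a b : F) : Fin 2 → Module.End F (Up F q) :=
  ![a • squareOps hq hq2 3 + a⁻¹ • squareOps hq hq2 0,
    b • squareOps hq hq2 1 + b⁻¹ • squareOps hq hq2 2]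

/-- The operators raise the degree by at most one and act on leading terms as left
multiplication by `a X` and `b Y`. -/
theorem ladder_leading (a b : F) (i : Fin 2) {n : ℕ} {u : Up F q} (hu : u ∈ degLT q (n + 1)) :
    ladder hq hq2 a b i u ∈ degLT q (n + 2) ∧
    (degHom F q (ladder hq hq2 a b i u)).coeff (n + 1) =
      (![a • upX q, b • upY q] : Fin 2 → Up F q) i * (degHom F q u).coeff n := by
  have h0 := skewDer_mem_degLT hq hq2 (Or.inl rfl) hu
  have h2 := skewDer_mem_degLT (inv_ne_zero hq) (inv_sq_ne_one hq2) (Or.inr rfl) hu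
  have m : n ≤ n + 2 := by omega
  fin_cases i
  · change a • (upX q * u) + a⁻¹ • skewDer hq hq2 (Or.inl rfl) u ∈ _ ∧
      (degHom F q (a • (upX q * u) + a⁻¹ • skewDer hq hq2 (Or.inl rfl) u)).coeff (n + 1)
        = (a • upX q) * _
    refine ⟨add_mem (Submodule.smul_mem _ _ (upX_mul_mem_degLT hu))
      (Submodule.smul_mem _ _ (degLT_mono m h0)), ?_⟩
    rw [map_add, map_smul, map_smul, coeff_add, coeff_smul, coeff_smul, h0 (n + 1) (by omega),
      degHom_upX, coeff_monomial_mul, smul_zero, add_zero, smul_mul_assoc]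
  · change b • (upY q * u) + b⁻¹ • skewDer (inv_ne_zero hq) (inv_sq_ne_one hq2) (Or.inr rfl) u ∈ _ ∧
      (degHom F q (b • (upY q * u) +
        b⁻¹ • skewDer (inv_ne_zero hq) (inv_sq_ne_one hq2) (Or.inr rfl) u)).coeff (n + 1)
        = (b • upY q) * _
    refine ⟨add_mem (Submodule.smul_mem _ _ (upY_mul_mem_degLT hu))
      (Submodule.smul_mem _ _ (degLT_mono m h2)), ?_⟩
    rw [map_add, map_smul, map_smul, coeff_add, coeff_smul, coeff_smul, h2 (n + 1) (by omega),
      degHom_upY, coeff_monomial_mul, smul_zero, add_zero, smul_mul_assoc]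

/-- The map `p ↦ p(A, B) · 1`, where `A` and `B` act on `U_q^+` by `ladder`. -/
def orbit (a b : F) : FreeAlgebra F (Fin 2) →ₗ[F] Up F q :=
  LinearMap.applyₗ (1 : Up F q) ∘ₗ (FreeAlgebra.lift F (ladder hq hq2 a b)).toLinearMap

theorem orbit_one (a b : F) : orbit hq hq2 a b 1 = 1 := by simp [orbit]

theorem orbit_ι_mul (a b : F) (i : Fin 2) (p : FreeAlgebra F (Fin 2)) :
    orbit hq hq2 a b (FreeAlgebra.ι F i * p) = ladder hq hq2 a b i (orbit hq hq2 a b p) := by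
  simp [orbit]

theorem one_mem_degLT : (1 : Up F q) ∈ degLT q 1 := by
  intro k hk
  rw [map_one, coeff_one, if_neg (by omega)]

theorem orbit_mem_degLT (a b : F) {n : ℕ} {p : FreeAlgebra F (Fin 2)} (hp : p ∈ degLE F n) :
    orbit hq hq2 a b p ∈ degLT q (n + 1) := by
  refine degLE_induction (N := fun n => (degLT q (n + 1)).comap (orbit hq hq2 a b)) ?_
    (fun n => Submodule.comap_mono (degLT_mono (by omega))) ?_ n hp
  · rw [Submodule.mem_comap, orbit_one]
    exact one_mem_degLT
  · intro n i p hp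
    rw [Submodule.mem_comap] at hp ⊢
    rw [orbit_ι_mul]
    exact (ladder_leading hq hq2 a b i hp).1

/-- The leading term of `p(A, B) · 1` is `p(a X, b Y)` for homogeneous `p`. -/
theorem coeff_orbit (a b : F) {n : ℕ} {p : FreeAlgebra F (Fin 2)} (hp : p ∈ genSpan F ^ n) :
    orbit hq hq2 a b p ∈ degLT q (n + 1) ∧ (degHom F q (orbit hq hq2 a b p)).coeff n =
      FreeAlgebra.lift F (![a • upX q, b • upY q] : Fin 2 → Up F q) p := by
  refine genSpan_pow_induction (N := fun n => (degLT q (n + 1)).comap (orbit hq hq2 a b) ⊓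
    LinearMap.eqLocus ((lcoeff (Up F q) n).restrictScalars F ∘ₗ (degHom F q).toLinearMap ∘ₗ
      orbit hq hq2 a b)
      (FreeAlgebra.lift F (![a • upX q, b • upY q] : Fin 2 → Up F q)).toLinearMap) ?_ ?_ n hp
  · refine ⟨?_, ?_⟩
    · rw [SetLike.mem_coe, Submodule.mem_comap, orbit_one]
      exact one_mem_degLT
    · change (degHom F q (orbit hq hq2 a b 1)).coeff 0 = FreeAlgebra.lift F _ 1
      rw [orbit_one, map_one, map_one, coeff_one_zero]
  · rintro n i p ⟨hp1, hp2⟩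
    have h := ladder_leading hq hq2 a b i hp1
    change (degHom F q (orbit hq hq2 a b p)).coeff n = FreeAlgebra.lift F _ p at hp2
    refine ⟨?_, ?_⟩
    · rw [SetLike.mem_coe, Submodule.mem_comap, orbit_ι_mul]
      exact h.1
    · change (degHom F q (orbit hq hq2 a b _)).coeff (n + 1) = FreeAlgebra.lift F _ _
      rw [orbit_ι_mul, h.2, map_mul, FreeAlgebra.lift_ι_apply, hp2]

/-- Rescaling the generators of `U_q^+` is an automorphism. -/
theorem upMk_eq_zero {a b : F} (ha : a ≠ 0) (hb : b ≠ 0) {p : FreeAlgebra F (Fin 2)}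
    (h : FreeAlgebra.lift F (![a • upX q, b • upY q] : Fin 2 → Up F q) p = 0) : upMk q p = 0 := by
  have e : (upLift (a⁻¹ • upX q) (b⁻¹ • upY q)
      (by rw [qSerre_smul_smul, upX_serre, smul_zero])
      (by rw [qSerre_smul_smul, upY_serre, smul_zero])).comp
      (FreeAlgebra.lift F (![a • upX q, b • upY q] : Fin 2 → Up F q)) = upMk q := by
    refine FreeAlgebra.hom_ext (funext fun i => ?_)
    fin_cases i
    · simp [upLift_upX, smul_smul, mul_inv_cancel₀ ha]; rfl
    · simp [upLift_upY, smul_smul, mul_inv_cancel₀ hb]; rfl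
  rw [← e, AlgHom.comp_apply, h, map_zero]

end LeadingTerm

/-! ### The associated graded algebra of `O_q` -/

section AssociatedGraded

open Polynomial

variable {F : Type*} [Field F] (q : F)

/-- The quotient map onto `O_q`. -/
def onsagerMk : FreeAlgebra F (Fin 2) →ₐ[F] Onsager F q := RingQuot.mkAlgHom F (OnsagerRel F q)

/-- The image in `O_q` of the noncommutative polynomials of degree less than `n`; the shift of the
index gives the associated graded algebra in degree `0` its usual meaning. -/
def onsagerFil : ℕ → Submodule F (Onsager F q)
  | 0 => ⊥
  | n + 1 => (degLE F n).map (onsagerMk q).toLinearMap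

variable {q}

theorem onsagerFil_mono : Monotone (onsagerFil (F := F) q) := by
  refine monotone_nat_of_le_succ fun n => ?_
  cases n with
  | zero => exact bot_le
  | succ n => exact Submodule.map_mono (degLE_mono (Nat.le_succ n))

theorem mul_mem_onsagerFil {m n : ℕ} {p : FreeAlgebra F (Fin 2)} (hp : p ∈ degLE F m)
    {z : Onsager F q} (hz : z ∈ onsagerFil q n) : onsagerMk q p * z ∈ onsagerFil q (n + m) := by
  cases n with
  | zero =>
    rw [onsagerFil, Submodule.mem_bot] at hz
    rw [hz, mul_zero]
    exact zero_mem _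
  | succ n =>
    obtain ⟨r, hr, rfl⟩ := hz
    rw [show n + 1 + m = m + n + 1 by omega]
    refine ⟨p * r, ?_, map_mul (onsagerMk q) _ _⟩
    rw [SetLike.mem_coe, degLE, pow_add]
    exact Submodule.mul_mem_mul hp hr

theorem ι_mem_degLE (i : Fin 2) : FreeAlgebra.ι F i ∈ degLE F 1 := by
  rw [degLE, pow_one]
  exact Submodule.mem_sup_right (ι_mem_genSpan i)

/-- The homomorphism `p(x₀, x₁) ↦ p(A t, B t)` from the free algebra to `O_q[t]`. -/
def rees (q : F) : FreeAlgebra F (Fin 2) →ₐ[F] (Onsager F q)[X] :=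
  FreeAlgebra.lift F fun i => monomial 1 (onsagerMk q (FreeAlgebra.ι F i))

theorem rees_ι (i : Fin 2) :
    rees q (FreeAlgebra.ι F i) = monomial 1 (onsagerMk q (FreeAlgebra.ι F i)) :=
  FreeAlgebra.lift_ι_apply _ _

theorem rees_genSpan_pow {n : ℕ} {p : FreeAlgebra F (Fin 2)} (hp : p ∈ genSpan F ^ n) :
    rees q p = monomial n (onsagerMk q p) := by
  refine genSpan_pow_induction (N := fun n => LinearMap.eqLocus (rees q).toLinearMap
    ((monomial n).restrictScalars F ∘ₗ (onsagerMk q).toLinearMap)) ?_ ?_ n hp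
  · change rees q 1 = monomial 0 (onsagerMk q 1)
    rw [map_one, map_one]
    rfl
  · intro n i p hp
    change rees q p = monomial n (onsagerMk q p) at hp
    change rees q (FreeAlgebra.ι F i * p) = monomial (n + 1) (onsagerMk q _)
    rw [map_mul, map_mul, hp, rees_ι, monomial_mul_monomial, add_comm 1 n]

/-- The noncommutative polynomials all of whose homogeneous parts have, in `O_q`, smaller degree
than expected. -/
def dropIdeal (q : F) : Submodule F (FreeAlgebra F (Fin 2)) where
  carrier := {p | ∀ n, (rees q p).coeff n ∈ onsagerFil q n}
  add_mem' := by
    intro u v hu hv n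
    rw [map_add, coeff_add]
    exact add_mem (hu n) (hv n)
  zero_mem' := by intro n; rw [map_zero, coeff_zero]; exact zero_mem _
  smul_mem' := by
    intro c u hu n
    rw [map_smul, coeff_smul]
    exact Submodule.smul_mem _ c (hu n)

theorem ι_mul_mem_dropIdeal (i : Fin 2) {p : FreeAlgebra F (Fin 2)} (hp : p ∈ dropIdeal q) :
    FreeAlgebra.ι F i * p ∈ dropIdeal q := by
  intro n
  rw [map_mul, rees_ι]
  cases n with
  | zero => rw [coeff_zero_monomial_one_mul]; exact zero_mem _
  | succ n =>
    rw [coeff_monomial_mul]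
    exact mul_mem_onsagerFil (ι_mem_degLE i) (hp n)

theorem rees_coeff_mem (p : FreeAlgebra F (Fin 2)) (n : ℕ) :
    (rees q p).coeff n ∈ onsagerFil q (n + 1) := by
  revert n
  let N : Submodule F (FreeAlgebra F (Fin 2)) :=
    { carrier := {p | ∀ n, (rees q p).coeff n ∈ onsagerFil q (n + 1)}
      add_mem' := by
        intro u v hu hv n
        rw [map_add, coeff_add]
        exact add_mem (hu n) (hv n)
      zero_mem' := by intro n; rw [map_zero, coeff_zero]; exact zero_mem _
      smul_mem' := by
        intro c u hu n
        rw [map_smul, coeff_smul]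
        exact Submodule.smul_mem _ c (hu n) }
  change p ∈ N
  refine freeAlgebra_induction N ?_ ?_ p
  · intro n
    rw [map_one, coeff_one]
    split_ifs with h
    · refine onsagerFil_mono (Nat.le_add_left 1 n) ⟨1, ?_, map_one (onsagerMk q)⟩
      rw [SetLike.mem_coe, degLE, pow_zero]
      exact Submodule.one_le.1 le_rfl
    · exact zero_mem _
  · intro i p hp n
    rw [map_mul, rees_ι]
    cases n with
    | zero => rw [coeff_zero_monomial_one_mul]; exact zero_mem _
    | succ n =>
      rw [coeff_monomial_mul]
      exact mul_mem_onsagerFil (ι_mem_degLE i) (hp n)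

/-- Since the right side of a Dolan/Grady relation has degree two, the Serre expressions
lie in the kernel of the map to the associated graded algebra. -/
theorem serre_mul_mem_dropIdeal {i j : Fin 2} {c : F}
    (h : qSerre q (onsagerMk q (FreeAlgebra.ι F i)) (onsagerMk q (FreeAlgebra.ι F j)) =
      c • (onsagerMk q
        (FreeAlgebra.ι F j * FreeAlgebra.ι F i - FreeAlgebra.ι F i * FreeAlgebra.ι F j)))
    (p : FreeAlgebra F (Fin 2)) :
    qSerre q (FreeAlgebra.ι F i) (FreeAlgebra.ι F j) * p ∈ dropIdeal q := by
  have e : rees q (qSerre q (FreeAlgebra.ι F i) (FreeAlgebra.ι F j)) = monomial 4 (c • onsagerMk q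
      (FreeAlgebra.ι F j * FreeAlgebra.ι F i - FreeAlgebra.ι F i * FreeAlgebra.ι F j)) := by
    refine (map_qSerre (B := (Onsager F q)[X]) (rees q) q _ _).trans ?_
    rw [rees_ι, rees_ι, ← h]
    exact qSerre_monomial q _ _
  intro n
  rw [map_mul, e]
  by_cases hn : n < 4
  · rw [coeff_mul, Finset.sum_eq_zero]
    · exact zero_mem _
    · intro x hx
      have := Finset.HasAntidiagonal.mem_antidiagonal.1 hx
      rw [coeff_monomial, if_neg (by omega), zero_mul]
  · obtain ⟨m, rfl⟩ : ∃ m, n = m + 4 := ⟨n - 4, by omega⟩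
    rw [coeff_monomial_mul, smul_mul_assoc]
    refine Submodule.smul_mem _ c (onsagerFil_mono (show m + 1 + 2 ≤ m + 4 by omega)
      (mul_mem_onsagerFil ?_ (rees_coeff_mem p m)))
    rw [degLE, pow_two]
    have h := fun i : Fin 2 => Submodule.mem_sup_right (S := 1) (ι_mem_genSpan (F := F) i)
    exact sub_mem (Submodule.mul_mem_mul (h j) (h i)) (Submodule.mul_mem_mul (h i) (h j))

theorem onsager_serre (i j : Fin 2) (hij : i ≠ j) :
    qSerre q (onsagerMk q (FreeAlgebra.ι F i)) (onsagerMk q (FreeAlgebra.ι F j)) =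
      ((q ^ 2 - q⁻¹ ^ 2) ^ 2) • (onsagerMk q (FreeAlgebra.ι F j * FreeAlgebra.ι F i -
        FreeAlgebra.ι F i * FreeAlgebra.ι F j)) := by
  have h1 : onsagerMk q _ = onsagerMk q _ :=
    RingQuot.mkAlgHom_rel F (OnsagerRel.DG1 (F := F) (q := q))
  have h2 : onsagerMk q _ = onsagerMk q _ :=
    RingQuot.mkAlgHom_rel F (OnsagerRel.DG2 (F := F) (q := q))
  rw [map_qSerre, map_smul] at h1 h2
  fin_cases i <;> fin_cases j
  · exact absurd rfl hij
  · exact h1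
  · exact h2
  · exact absurd rfl hij

/-- Left multiplication by a generator on the quotient of the free algebra by `dropIdeal`. -/
def dropMul (q : F) (i : Fin 2) : Module.End F (FreeAlgebra F (Fin 2) ⧸ dropIdeal q) :=
  (dropIdeal q).mapQ (dropIdeal q) (LinearMap.mulLeft F (FreeAlgebra.ι F i))
    fun _ hp => ι_mul_mem_dropIdeal i hp

theorem dropMul_mk (i : Fin 2) (p : FreeAlgebra F (Fin 2)) :
    dropMul q i ((dropIdeal q).mkQ p) = (dropIdeal q).mkQ (FreeAlgebra.ι F i * p) := rfl

theorem dropMul_serre (i j : Fin 2) (hij : i ≠ j) :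
    qSerre q (dropMul q i) (dropMul q j) = 0 := by
  refine Submodule.linearMap_qext _ (LinearMap.ext fun p => ?_)
  have h := serre_mul_mem_dropIdeal (onsager_serre (q := q) i j hij) p
  rw [← Submodule.Quotient.mk_eq_zero] at h
  refine Eq.trans ?_ h
  change _ = (dropIdeal q).mkQ _
  simp only [qSerre, pow_three, pow_two, mul_assoc, LinearMap.comp_apply, LinearMap.sub_apply,
    LinearMap.add_apply, LinearMap.smul_apply, Module.End.mul_apply, dropMul_mk, sub_mul, add_mul, smul_mul_assoc,
    map_sub, map_add, map_smul]

/-- The associated graded algebra of `O_q` is a quotient of `U_q^+`: a homogeneous relation of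
`U_q^+` holds in `O_q` up to terms of lower degree. -/
theorem onsagerMk_mem_of_upMk_eq_zero {n : ℕ} {p : FreeAlgebra F (Fin 2)}
    (hp : p ∈ genSpan F ^ n) (h : upMk q p = 0) : onsagerMk q p ∈ onsagerFil q n := by
  have key : ∀ r : FreeAlgebra F (Fin 2),
      FreeAlgebra.lift F ![dropMul q 0, dropMul q 1] r ((dropIdeal q).mkQ 1) =
        (dropIdeal q).mkQ r := by
    refine freeAlgebra_induction (LinearMap.eqLocus
      (LinearMap.applyₗ ((dropIdeal q).mkQ 1) ∘ₗ
        (FreeAlgebra.lift F ![dropMul q 0, dropMul q 1]).toLinearMap) (dropIdeal q).mkQ) ?_ ?_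
    · simp
    · intro i r hr
      simp only [LinearMap.mem_eqLocus, LinearMap.comp_apply, AlgHom.toLinearMap_apply,
        LinearMap.applyₗ_apply_apply] at hr ⊢
      rw [map_mul, Module.End.mul_apply, hr, FreeAlgebra.lift_ι_apply, ← dropMul_mk]
      fin_cases i <;> rfl
  have h0 := key p
  rw [← upLift_mk (q := q) _ _ (dropMul_serre 0 1 (by decide)) (dropMul_serre 1 0 (by decide)), h,
    map_zero, LinearMap.zero_apply] at h0
  have h1 : p ∈ dropIdeal q := (Submodule.Quotient.mk_eq_zero _).1 h0.symm
  have h2 := h1 n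
  rwa [rees_genSpan_pow hp, coeff_monomial_same] at h2

end AssociatedGraded

/-! ### Injectivity -/

section Injectivity

open TensorProduct

variable {F : Type*} [Field F] {q : F}

/-- The value `p(A, B) · 1` depends only on the image of `p` in `O_q`. -/
theorem orbit_congr (hq : q ≠ 0) (hq2 : q ^ 2 ≠ 1) {a b : F} (ha : a ≠ 0) (hb : b ≠ 0)
    {p p' : FreeAlgebra F (Fin 2)} (h : onsagerMk q p = onsagerMk q p') :
    orbit hq hq2 a b p = orbit hq hq2 a b p' := by
  have hS := squareOps_isSquare4 (F := F) hq hq2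
  let g : Onsager F q →ₐ[F] Module.End F (Up F q) := onsagerLift _ _
    (hS.dolanGrady hq hq2 (i := 3) (j := 0) (k := 1) (l := 2) ha rfl rfl rfl (b := b))
    (hS.dolanGrady hq hq2 (i := 1) (j := 2) (k := 3) (l := 0) hb rfl rfl rfl (b := a))
  have hg : ∀ p, g (onsagerMk q p) 1 = orbit hq hq2 a b p := fun p =>
    LinearMap.congr_fun (onsagerLift_mk _ _ _ _ p) 1
  rw [← hg, ← hg, h]

/-- The orbit map `z ↦ z · 1` from `O_q` to `U_q^+` is injective. By induction on the degree of `p`: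
if `p(A, B) · 1 = 0`, the top part of `p` is a relation of `U_q^+`, so in `O_q` it may be replaced
by a polynomial of lower degree. -/
theorem onsagerMk_eq_zero (hq : q ≠ 0) (hq2 : q ^ 2 ≠ 1) {a b : F} (ha : a ≠ 0) (hb : b ≠ 0)
    (p : FreeAlgebra F (Fin 2)) (h : orbit hq hq2 a b p = 0) : onsagerMk q p = 0 := by
  obtain ⟨n, hn⟩ := exists_mem_degLE p
  induction n generalizing p with
  | zero =>
    rw [degLE, pow_zero, Submodule.mem_one] at hn
    obtain ⟨c, rfl⟩ := hn
    rw [Algebra.algebraMap_eq_smul_one, map_smul, orbit_one, smul_eq_zero] at h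
    rw [h.resolve_right (up_one_ne_zero q), map_zero, map_zero]
  | succ n ih =>
    obtain ⟨r, hr, l, hl, rfl⟩ := Submodule.mem_sup.1 (degLE_succ_le n hn)
    have h1 : FreeAlgebra.lift F (![a • upX q, b • upY q] : Fin 2 → Up F q) r = 0 := by
      have := congrArg (fun u => (degHom F q u).coeff (n + 1)) h
      simp only [map_add, Polynomial.coeff_add, map_zero, Polynomial.coeff_zero] at this
      rwa [(coeff_orbit hq hq2 a b hr).2, orbit_mem_degLT hq hq2 a b hl _ le_rfl, add_zero] at this
    obtain ⟨l', hl', e⟩ := onsagerMk_mem_of_upMk_eq_zero hr (upMk_eq_zero ha hb h1)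
    have e' : onsagerMk q (r + l) = onsagerMk q (l' + l) := by
      rw [map_add, map_add, ← e]
      rfl
    rw [e']
    exact ih _ ((orbit_congr hq hq2 ha hb e').symm.trans h) (add_mem hl' hl)

/-- Through `f`, the element `p(A, B)` of `O_q` acts on `1 ⊗ U_q^+` as it does on `U_q^+`. -/
theorem tetRep_orbit (hq : q ≠ 0) (hq2 : q ^ 2 ≠ 1) {a b : F} (f : Onsager F q →ₐ[F] Tet F q)
    (hfA : f (Ag F q) = a • xt F q 3 0 (Or.inl (by decide)) +
      a⁻¹ • xt F q 0 1 (Or.inl (by decide)))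
    (hfB : f (Bg F q) = b • xt F q 1 2 (Or.inl (by decide)) +
      b⁻¹ • xt F q 2 3 (Or.inl (by decide))) (p : FreeAlgebra F (Fin 2)) :
    tetRep hq hq2 (squareOps_isSquare4 hq hq2) (f (onsagerMk q p)) (1 ⊗ₜ 1) =
      1 ⊗ₜ orbit hq hq2 a b p := by
  have hS := squareOps_isSquare4 (F := F) hq hq2
  refine freeAlgebra_induction (LinearMap.eqLocus
    (LinearMap.applyₗ ((1 : Torus F) ⊗ₜ[F] (1 : Up F q)) ∘ₗ
      ((tetRep hq hq2 hS).comp (f.comp (onsagerMk q))).toLinearMap)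
    (TensorProduct.mk F (Torus F) (Up F q) 1 ∘ₗ orbit hq hq2 a b)) ?_ ?_ p
  · simp [orbit_one]
  · intro i p hp
    change tetRep hq hq2 hS (f (onsagerMk q p)) (1 ⊗ₜ 1) = 1 ⊗ₜ orbit hq hq2 a b p at hp
    change tetRep hq hq2 hS (f (onsagerMk q (FreeAlgebra.ι F i * p))) (1 ⊗ₜ 1) =
      1 ⊗ₜ orbit hq hq2 a b _
    rw [map_mul, map_mul, map_mul, Module.End.mul_apply, hp, orbit_ι_mul]
    fin_cases i
    · change tetRep hq hq2 hS (f (Ag F q)) _ = 1 ⊗ₜ (a • squareOps hq hq2 3 _ +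
        a⁻¹ • squareOps hq hq2 0 _)
      rw [hfA, map_add, map_smul, map_smul, LinearMap.add_apply, LinearMap.smul_apply,
        LinearMap.smul_apply, tetRep_xt _ _ _ _ _ (by decide), tetRep_xt _ _ _ _ _ (by decide),
        tmul_add, tmul_smul, tmul_smul]
    · change tetRep hq hq2 hS (f (Bg F q)) _ = 1 ⊗ₜ (b • squareOps hq hq2 1 _ +
        b⁻¹ • squareOps hq hq2 2 _)
      rw [hfB, map_add, map_smul, map_smul, LinearMap.add_apply, LinearMap.smul_apply,
        LinearMap.smul_apply, tetRep_xt _ _ _ _ _ (by decide), tetRep_xt _ _ _ _ _ (by decide),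
        tmul_add, tmul_smul, tmul_smul]

end Injectivity

/-- Proposition 11.9: for nonzero `a, b` there is an injective algebra homomorphism
`O_q → ⊠_q` sending `A ↦ a x_{30} + a⁻¹ x_{01}` and `B ↦ b x_{12} + b⁻¹ x_{23}`. -/
theorem stmt18 (F : Type*) [Field F] (q : F) (hq : q ≠ 0) (hq2 : q ^ 2 ≠ 1)
    (a b : F) (ha : a ≠ 0) (hb : b ≠ 0) :
    ∃ f : Onsager F q →ₐ[F] Tet F q,
      (f (Ag F q) = a • xt F q 3 0 (Or.inl (by decide)) +
          a⁻¹ • xt F q 0 1 (Or.inl (by decide)) ∧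
       f (Bg F q) = b • xt F q 1 2 (Or.inl (by decide)) +
          b⁻¹ • xt F q 2 3 (Or.inl (by decide))) ∧
      Function.Injective f := by
  have hX := xt_isSquare4 (F := F) hq hq2
  let f : Onsager F q →ₐ[F] Tet F q := onsagerLift _ _
    (hX.dolanGrady hq hq2 (i := 3) (j := 0) (k := 1) (l := 2) ha rfl rfl rfl (b := b))
    (hX.dolanGrady hq hq2 (i := 1) (j := 2) (k := 3) (l := 0) hb rfl rfl rfl (b := a))
  have hf : ∀ p, f (onsagerMk q p) = FreeAlgebra.lift F _ p := onsagerLift_mk _ _ _ _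
  have hfA : f (Ag F q) = a • xt F q 3 0 (Or.inl (by decide)) +
      a⁻¹ • xt F q 0 1 (Or.inl (by decide)) :=
    (hf (FreeAlgebra.ι F 0)).trans (FreeAlgebra.lift_ι_apply _ _)
  have hfB : f (Bg F q) = b • xt F q 1 2 (Or.inl (by decide)) +
      b⁻¹ • xt F q 2 3 (Or.inl (by decide)) :=
    (hf (FreeAlgebra.ι F 1)).trans (FreeAlgebra.lift_ι_apply _ _)
  refine ⟨f, ⟨hfA, hfB⟩, ?_⟩
  rw [injective_iff_map_eq_zero]
  intro z hz
  obtain ⟨p, rfl⟩ := RingQuot.mkAlgHom_surjective F (OnsagerRel F q) z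
  change f (onsagerMk q p) = 0 at hz
  refine onsagerMk_eq_zero hq hq2 ha hb p (one_tmul_injective (F := F) ?_)
  rw [← tetRep_orbit hq hq2 f hfA hfB, hz, map_zero, LinearMap.zero_apply, TensorProduct.tmul_zero]
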